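/- Let ω_{ij} : ℝ⁸ → ℝ (1 ≤ i,j ≤ 4) be smooth functions of (x¹,...,x⁴, y¹,...,y⁴) with ω_{ij} = −ω_{ji}, and suppose that for all indices i,j,k ∈ {1,2,3,4} the cyclic closedness conditions ∂_{y^k}ω_{ij} + ∂_{y^i}ω_{jk} + ∂_{y^j}ω_{ki} = 0 and ∂_{x^k}ω_{ij} + ∂_{x^i}ω_{jk} + ∂_{x^j}ω_{ki} = 0 hold identically. Then there exists a smooth potential Θ : ℝ⁸ → ℝ such that ω_{ij} = Θ_{x^i y^j} − Θ_{x^j y^i} for all i, j. -/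

import Mathlib

noncomputable section

/-- `ℝ⁸` with coordinates `(x¹,…,x⁴, y¹,…,y⁴)`. -/
abbrev E8 : Type := (Fin 4 → ℝ) × (Fin 4 → ℝ)

/-- Directional (partial) derivative of `f` in the direction `v`. -/
def pdv {E : Type*} [NormedAddCommGroup E] [NormedSpace ℝ E]
    (v : E) (f : E → ℝ) (z : E) : ℝ := fderiv ℝ f z v

/-- Direction of the coordinate `x^i`. -/
def dx (i : Fin 4) : E8 := (Pi.single i 1, 0)
/-- Direction of the coordinate `y^i`. -/
def dy (i : Fin 4) : E8 := (0, Pi.single i 1)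

open MeasureTheory Filter Topology Set in
theorem contDiff_fderiv_param {T E F : Type} [NormedAddCommGroup T] [NormedSpace ℝ T]
    [NormedAddCommGroup E] [NormedSpace ℝ E] [NormedAddCommGroup F] [NormedSpace ℝ F]
    {f : T → E → F} (hf : ContDiff ℝ (⊤ : ℕ∞) (Function.uncurry f)) :
    ContDiff ℝ (⊤ : ℕ∞) (Function.uncurry fun t x => fderiv ℝ (f t) x) := by
  have h : ContDiff ℝ (⊤ : ℕ∞) (Function.uncurry fun (p : T × E) (x : E) => f p.1 x) := by
    have : (Function.uncurry fun (p : T × E) (x : E) => f p.1 x)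
      = Function.uncurry f ∘ fun q : (T × E) × E => (q.1.1, q.2) := rfl
    rw [this]
    exact hf.comp (by fun_prop)
  exact ContDiff.fderiv (n := (⊤ : ℕ∞)) (g := fun p : T × E => p.2) h contDiff_snd (by simp)

theorem continuous_iteratedFDeriv_param {T E : Type} [NormedAddCommGroup T] [NormedSpace ℝ T]
    [NormedAddCommGroup E] [NormedSpace ℝ E] (n : ℕ) :
    ∀ {F : Type} [NormedAddCommGroup F] [NormedSpace ℝ F] {f : T → E → F},
      ContDiff ℝ (⊤ : ℕ∞) (Function.uncurry f) →
      Continuous (Function.uncurry fun t x => iteratedFDeriv ℝ n (f t) x) := by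
  induction n with
  | zero =>
    intro F _ _ f hf
    have := hf.continuous
    simp only [Function.uncurry_def, iteratedFDeriv_zero_eq_comp, Function.comp] at this ⊢
    exact (LinearIsometryEquiv.continuous _).comp this
  | succ n ih =>
    intro F _ _ f hf
    have := ih (contDiff_fderiv_param hf)
    simp only [Function.uncurry_def, iteratedFDeriv_succ_eq_comp_right, Function.comp] at this ⊢
    exact (LinearIsometryEquiv.continuous _).comp this

/-- Families of smooth functions whose derivatives of every order are dominated by integrable
functions of the parameter, locally uniformly in the variable. -/
structure Dominated {T E F : Type} [MeasurableSpace T] [NormedAddCommGroup E] [NormedSpace ℝ E]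
    [NormedAddCommGroup F] [NormedSpace ℝ F] (μ : MeasureTheory.Measure T) (f : T → E → F) :
    Prop where
  smooth : ∀ t, ContDiff ℝ (⊤ : ℕ∞) (f t)
  meas : ∀ n x, MeasureTheory.AEStronglyMeasurable (fun t => iteratedFDeriv ℝ n (f t) x) μ
  bound : ∀ (n : ℕ) (R : ℝ), ∃ B : T → ℝ, MeasureTheory.Integrable B μ ∧
    ∀ᵐ t ∂μ, ∀ x : E, ‖x‖ < R → ‖iteratedFDeriv ℝ n (f t) x‖ ≤ B t

namespace Dominated

open MeasureTheory Filter Topology Set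

variable {T E F G : Type} [MeasurableSpace T] [NormedAddCommGroup E] [NormedSpace ℝ E]
    [NormedAddCommGroup F] [NormedSpace ℝ F] [NormedAddCommGroup G] [NormedSpace ℝ G]
    {μ : Measure T} {f : T → E → F}

theorem fderiv (h : Dominated μ f) : Dominated μ (fun t x => fderiv ℝ (f t) x) where
  smooth t := (h.smooth t).fderiv_right (by simp)
  meas n x := by
    have := h.meas (n + 1) x
    simp only [iteratedFDeriv_succ_eq_comp_right, Function.comp] at this
    have h2 := (LinearIsometryEquiv.continuous
      (continuousMultilinearCurryRightEquiv' ℝ n E F)).comp_aestronglyMeasurable this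
    simpa using h2
  bound n R := by
    obtain ⟨B, hB, h1⟩ := h.bound (n + 1) R
    refine ⟨B, hB, ?_⟩
    filter_upwards [h1] with t ht x hx
    have := ht x hx
    rwa [← norm_iteratedFDeriv_fderiv] at this

theorem clm_comp (h : Dominated μ f) (L : F →L[ℝ] G) : Dominated μ (fun t x => L (f t x)) where
  smooth t := L.contDiff.comp (h.smooth t)
  meas n x := by
    have h2 := (ContinuousLinearMap.compContinuousMultilinearMapL ℝ (fun _ : Fin n => E) F G
      L).continuous.comp_aestronglyMeasurable (h.meas n x)
    refine h2.congr (Eventually.of_forall fun t => ?_)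
    have := L.iteratedFDeriv_comp_left (h.smooth t).contDiffAt (x := x) (i := n)
      (by exact_mod_cast le_top)
    simpa [Function.comp_def] using this.symm
  bound n R := by
    obtain ⟨B, hB, h1⟩ := h.bound n R
    refine ⟨fun t => ‖L‖ * B t, hB.const_mul _, ?_⟩
    filter_upwards [h1] with t ht x hx
    have := L.norm_iteratedFDeriv_comp_left (h.smooth t).contDiffAt (x := x) (n := n)
      (by exact_mod_cast le_top)
    exact this.trans (mul_le_mul_of_nonneg_left (ht x hx) (norm_nonneg _))

theorem aestronglyMeasurable (h : Dominated μ f) (x : E) :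
    AEStronglyMeasurable (fun t => f t x) μ := by
  have := h.meas 0 x
  simp only [iteratedFDeriv_zero_eq_comp, Function.comp] at this
  have h2 := (LinearIsometryEquiv.continuous
      (continuousMultilinearCurryFin0 ℝ E F)).comp_aestronglyMeasurable this
  simpa using h2

theorem integrable (h : Dominated μ f) (x : E) : Integrable (fun t => f t x) μ := by
  obtain ⟨B, hB, h1⟩ := h.bound 0 (‖x‖ + 1)
  refine hB.mono' (h.aestronglyMeasurable x) ?_
  filter_upwards [h1] with t ht
  simpa using ht x (by linarith)

theorem hasFDerivAt (h : Dominated μ f) (x : E) :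
    HasFDerivAt (fun x => ∫ t, f t x ∂μ) (∫ t, _root_.fderiv ℝ (f t) x ∂μ) x := by
  obtain ⟨B, hB, h1⟩ := h.fderiv.bound 0 (‖x‖ + 1)
  refine hasFDerivAt_integral_of_dominated_of_fderiv_le (bound := B)
    (F' := fun x t => _root_.fderiv ℝ (f t) x)
    (s := Metric.ball 0 (‖x‖ + 1)) (Metric.isOpen_ball.mem_nhds (by simp))
    (Eventually.of_forall fun x => h.aestronglyMeasurable x) (h.integrable x)
    (h.fderiv.aestronglyMeasurable x) ?_ hB ?_
  · filter_upwards [h1] with t ht y hy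
    simpa using ht y (by simpa using hy)
  · exact Eventually.of_forall fun t y _ =>
      ((h.smooth t).differentiable (by simp)).differentiableAt.hasFDerivAt

theorem fderiv_integral (h : Dominated μ f) :
    _root_.fderiv ℝ (fun x => ∫ t, f t x ∂μ) = fun x => ∫ t, _root_.fderiv ℝ (f t) x ∂μ :=
  funext fun x => (h.hasFDerivAt x).fderiv

theorem contDiff (h : Dominated μ f) : ContDiff ℝ (⊤ : ℕ∞) (fun x => ∫ t, f t x ∂μ) := by
  refine contDiff_infty.2 fun n => ?_
  induction n generalizing F with
  | zero =>
    exact contDiff_zero.2 (continuous_iff_continuousAt.2 fun x => (h.hasFDerivAt x).continuousAt)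
  | succ n ih =>
    rw [Nat.cast_succ, contDiff_succ_iff_fderiv]
    refine ⟨fun x => (h.hasFDerivAt x).differentiableAt, by simp, ?_⟩
    rw [h.fderiv_integral]
    exact ih h.fderiv

theorem iteratedFDeriv_integral_le (h : Dominated μ f) (n : ℕ) (x : E) :
    ‖iteratedFDeriv ℝ n (fun x => ∫ t, f t x ∂μ) x‖ ≤ ∫ t, ‖iteratedFDeriv ℝ n (f t) x‖ ∂μ := by
  induction n generalizing F with
  | zero => simpa using norm_integral_le_integral_norm _
  | succ n ih =>
    simp only [← norm_iteratedFDeriv_fderiv]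
    rw [h.fderiv_integral]
    exact ih h.fderiv

theorem pdv {f : T → E → ℝ} (h : Dominated μ f) (v : E) : Dominated μ (fun t => pdv v (f t)) :=
  h.fderiv.clm_comp (ContinuousLinearMap.apply ℝ ℝ v)

theorem pdv_integral {f : T → E → ℝ} (h : Dominated μ f) (v : E) :
    _root_.pdv v (fun x => ∫ t, f t x ∂μ) = fun x => ∫ t, _root_.pdv v (f t) x ∂μ := by
  funext x
  rw [_root_.pdv, h.fderiv_integral]
  exact ContinuousLinearMap.integral_apply (h.fderiv.integrable x) v

/-- A smooth family which, locally uniformly in the variable, is supported in a compact set of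
parameters, multiplied by a locally integrable weight. -/
theorem of_compact {T : Type} [MeasurableSpace T] [NormedAddCommGroup T] [NormedSpace ℝ T]
    [FiniteDimensional ℝ T] [BorelSpace T] [FiniteDimensional ℝ E] {μ : Measure T}
    {f : T → E → F} (hf : ContDiff ℝ (⊤ : ℕ∞) (Function.uncurry f)) {κ : T → ℝ}
    (hκ : LocallyIntegrable κ μ)
    (hK : ∀ R : ℝ, ∃ K : Set T, IsCompact K ∧ ∀ᵐ t ∂μ, t ∉ K → ∀ x : E, ‖x‖ < R → f t x = 0) :
    Dominated μ (fun t x => κ t • f t x) := by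
  have hs : ∀ t, ContDiff ℝ (⊤ : ℕ∞) (f t) := fun t =>
    hf.comp (contDiff_const.prodMk contDiff_id : ContDiff ℝ _ fun x : E => (t, x))
  have hi : ∀ n t x, iteratedFDeriv ℝ n (fun x => κ t • f t x) x
      = κ t • iteratedFDeriv ℝ n (f t) x := fun n t x =>
    iteratedFDeriv_const_smul_apply (a := κ t) (f := f t)
      ((hs t).contDiffAt.of_le (by exact_mod_cast le_top))
  have : ProperSpace T := FiniteDimensional.proper ℝ T
  have : ProperSpace E := FiniteDimensional.proper ℝ E
  refine ⟨fun t => contDiff_const.smul (hs t), fun n x => ?_, fun n R => ?_⟩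
  · simp only [hi]
    exact hκ.aestronglyMeasurable.smul
      ((continuous_iteratedFDeriv_param n hf).comp
        (Continuous.prodMk_left x)).aestronglyMeasurable
  · obtain ⟨K, hKc, hK⟩ := hK R
    obtain ⟨C, hC⟩ := (hKc.prod (isCompact_closedBall (0 : E) R)).exists_bound_of_continuousOn
      (continuous_iteratedFDeriv_param n hf).continuousOn
    refine ⟨fun t => K.indicator (fun t => ‖κ t‖ * C) t, ?_, ?_⟩
    · exact (integrable_indicator_iff hKc.measurableSet).2
        ((hκ.integrableOn_isCompact hKc).norm.mul_const C)
    · filter_upwards [hK] with t ht x hx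
      rw [hi, norm_smul]
      by_cases htK : t ∈ K
      · rw [indicator_of_mem htK]
        exact mul_le_mul_of_nonneg_left (hC (t, x) ⟨htK, by simpa using hx.le⟩) (norm_nonneg _)
      · rw [indicator_of_notMem htK]
        have : f t =ᶠ[𝓝 x] fun _ => 0 := by
          filter_upwards [Metric.isOpen_ball.mem_nhds (show x ∈ Metric.ball 0 R by simpa using hx)]
            with y hy using ht htK y (by simpa using hy)
        rw [(this.iteratedFDeriv ℝ n).eq_of_nhds]
        simp

end Dominated

section PdvCalculus

variable {E E' : Type} [NormedAddCommGroup E] [NormedSpace ℝ E] [NormedAddCommGroup E']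
  [NormedSpace ℝ E'] {f g : E → ℝ}

theorem ContDiff.pdv (hf : ContDiff ℝ (⊤ : ℕ∞) f) (v : E) : ContDiff ℝ (⊤ : ℕ∞) (pdv v f) :=
  (hf.fderiv_right (by simp)).clm_apply contDiff_const

theorem ContDiff.smooth_differentiable {f : E → E'} (hf : ContDiff ℝ (⊤ : ℕ∞) f) :
    Differentiable ℝ f :=
  hf.differentiable (by simp)

theorem pdv_pdv (hf : ContDiff ℝ (⊤ : ℕ∞) f) (u v z : E) :
    pdv u (pdv v f) z = fderiv ℝ (fderiv ℝ f) z u v := by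
  have h : Differentiable ℝ (fderiv ℝ f) :=
    (hf.fderiv_right (m := (⊤ : ℕ∞)) (by simp)).smooth_differentiable
  have : pdv v f = fun z => fderiv ℝ f z v := rfl
  rw [this, pdv, fderiv_clm_apply h.differentiableAt (differentiableAt_const v)]
  simp

theorem pdv_comm (hf : ContDiff ℝ (⊤ : ℕ∞) f) (u v : E) :
    pdv u (pdv v f) = pdv v (pdv u f) := by
  funext z
  rw [pdv_pdv hf, pdv_pdv hf]
  exact (hf.contDiffAt.isSymmSndFDerivAt (by
    rw [minSmoothness_of_isRCLikeNormedField]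
    exact WithTop.coe_le_coe.2 (le_top : (2 : ℕ∞) ≤ ⊤))) u v

theorem pdv_add_vec (u v z : E) (f : E → ℝ) : pdv (u + v) f z = pdv u f z + pdv v f z :=
  map_add _ _ _

theorem pdv_smul_vec (c : ℝ) (v z : E) (f : E → ℝ) : pdv (c • v) f z = c * pdv v f z :=
  map_smul _ _ _

theorem pdv_zero_vec (z : E) (f : E → ℝ) : pdv 0 f z = 0 := map_zero _

theorem pdv_fun_zero (v : E) : pdv v (fun _ : E => (0 : ℝ)) = fun _ => 0 := by
  funext z
  simp [pdv]

theorem pdv_fun_sub (hf : Differentiable ℝ f) (hg : Differentiable ℝ g) (v : E) :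
    pdv v (fun z => f z - g z) = fun z => pdv v f z - pdv v g z := by
  funext z
  rw [pdv, fderiv_fun_sub hf.differentiableAt hg.differentiableAt]
  rfl

theorem pdv_const_mul (c : ℝ) (hf : Differentiable ℝ f) (v : E) :
    pdv v (fun z => c * f z) = fun z => c * pdv v f z := by
  funext z
  rw [pdv, fderiv_const_mul hf.differentiableAt]
  rfl

theorem pdv_eq_of_hasDerivAt (hf : Differentiable ℝ f) {z v : E} {c : ℝ}
    (h : HasDerivAt (fun t : ℝ => f (z + t • v)) c 0) : pdv v f z = c := by
  have h1 : HasDerivAt (fun t : ℝ => z + t • v) v 0 := by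
    simpa using ((hasDerivAt_id (0 : ℝ)).smul_const v).const_add z
  have h2 : HasFDerivAt f (fderiv ℝ f z) (z + (0 : ℝ) • v) := by
    simpa using (hf z).hasFDerivAt
  exact (h2.comp_hasDerivAt (0 : ℝ) h1).unique h

theorem hasDerivAt_line (hf : Differentiable ℝ f) (z v : E) (t : ℝ) :
    HasDerivAt (fun t : ℝ => f (z + t • v)) (pdv v f (z + t • v)) t := by
  have h1 : HasDerivAt (fun t : ℝ => z + t • v) v t := by
    simpa using ((hasDerivAt_id t).smul_const v).const_add z
  exact (hf _).hasFDerivAt.comp_hasDerivAt t h1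

theorem pdv_congr_of_eventuallyEq {z : E} (h : f =ᶠ[nhds z] g) (v : E) : pdv v f z = pdv v g z := by
  rw [pdv, pdv, h.fderiv_eq]

end PdvCalculus

theorem Dominated.of_Ioc {E F : Type} [NormedAddCommGroup E] [NormedSpace ℝ E]
    [NormedAddCommGroup F] [NormedSpace ℝ F] [FiniteDimensional ℝ E] {f : ℝ → E → F}
    (hf : ContDiff ℝ (⊤ : ℕ∞) (Function.uncurry f)) (a b : ℝ) :
    Dominated (MeasureTheory.volume.restrict (Set.Ioc a b)) f := by
  have := Dominated.of_compact (μ := MeasureTheory.volume.restrict (Set.Ioc a b)) hf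
    (κ := fun _ => 1) (MeasureTheory.locallyIntegrable_const 1) (fun R => ⟨Set.Icc a b,
      isCompact_Icc, ?_⟩)
  · simpa using this
  · filter_upwards [MeasureTheory.ae_restrict_mem measurableSet_Ioc] with t ht h
    exact absurd (Set.Ioc_subset_Icc_self ht) h

/-- The second order operator attached to a pair of indices. -/
def pairOp (i j : Fin 4) (Θ : E8 → ℝ) (z : E8) : ℝ :=
  pdv (dx i) (pdv (dy j) Θ) z - pdv (dx j) (pdv (dy i) Θ) z

/-- The space of triples `(θ, s, z)`. -/
abbrev X3 : Type := ℝ × ℝ × E8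

/-- The direction in `X3` given by a direction in `E8`. -/
def ez (v : E8) : X3 := (0, 0, v)

/-- The direction of the second coordinate of `X3`. -/
def es : X3 := (0, 1, 0)

open Real in
/-- The rotated coordinate direction in the `j`-th plane. -/
def perpV (θ : ℝ) (j : Fin 4) : E8 := (-sin θ) • dx j + cos θ • dy j

open Real in
/-- The coordinate dual to `perpV`. -/
def perpC (θ : ℝ) (j : Fin 4) (z : E8) : ℝ := -sin θ * z.1 j + cos θ * z.2 j

theorem perpC_perpV (θ : ℝ) (i j : Fin 4) : perpC θ i (perpV θ j) = if i = j then 1 else 0 := by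
  have := Real.sin_sq_add_cos_sq θ
  simp only [perpC, perpV, dx, dy]
  by_cases h : i = j
  · subst h
    simp
    linarith
  · simp [h]

theorem perpC_add_smul (θ t : ℝ) (i : Fin 4) (z v : E8) :
    perpC θ i (z + t • v) = perpC θ i z + t * perpC θ i v := by
  simp [perpC]
  ring

/-- Contraction along the rotated directions. -/
def contr (S : Finset (Fin 4)) (τ : ℝ) (p : X3) : E8 :=
  p.2.2 - (1 - τ) • ∑ i ∈ S, perpC p.1 i p.2.2 • perpV p.1 i

/-- The integrand of the homotopy operator. -/
def homotopyIntegrand (S : Finset (Fin 4)) (Q : Fin 4 → X3 → ℝ) (τ : ℝ) (p : X3) : ℝ :=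
  ∑ j ∈ S, perpC p.1 j p.2.2 * Q j (p.1, p.2.1, contr S τ p)

/-- The homotopy operator of the Poincaré lemma along the rotated directions. -/
def homotopyOp (S : Finset (Fin 4)) (Q : Fin 4 → X3 → ℝ) (p : X3) : ℝ :=
  ∫ τ in Set.Ioc (0 : ℝ) 1, homotopyIntegrand S Q τ p

/-- Families closed along the planes indexed by `S` and independent of the `k`-th plane. -/
structure IsClosedFamily (S : Finset (Fin 4)) (k : Fin 4) (Q : Fin 4 → X3 → ℝ) : Prop where
  smooth : ∀ j, ContDiff ℝ (⊤ : ℕ∞) (Q j)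
  closed_x : ∀ i ∈ S, ∀ j ∈ S, pdv (ez (dx i)) (Q j) = pdv (ez (dx j)) (Q i)
  closed_y : ∀ i ∈ S, ∀ j ∈ S, pdv (ez (dy i)) (Q j) = pdv (ez (dy j)) (Q i)
  indep_x : ∀ j, pdv (ez (dx k)) (Q j) = fun _ => 0
  indep_y : ∀ j, pdv (ez (dy k)) (Q j) = fun _ => 0

section Homotopy

variable {S : Finset (Fin 4)} {k : Fin 4} {Q : Fin 4 → X3 → ℝ}

theorem contDiff_perpC {E : Type} [NormedAddCommGroup E] [NormedSpace ℝ E] {a : E → ℝ} {b : E → E8}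
    (ha : ContDiff ℝ (⊤ : ℕ∞) a) (hb : ContDiff ℝ (⊤ : ℕ∞) b) (j : Fin 4) :
    ContDiff ℝ (⊤ : ℕ∞) fun p => perpC (a p) j (b p) := by
  unfold perpC
  fun_prop

theorem contDiff_perpV {E : Type} [NormedAddCommGroup E] [NormedSpace ℝ E] {a : E → ℝ}
    (ha : ContDiff ℝ (⊤ : ℕ∞) a) (j : Fin 4) :
    ContDiff ℝ (⊤ : ℕ∞) fun p => perpV (a p) j := by
  unfold perpV
  fun_prop

theorem contDiff_contr (S : Finset (Fin 4)) :
    ContDiff ℝ (⊤ : ℕ∞) (Function.uncurry (contr S)) := by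
  have h1 : ContDiff ℝ (⊤ : ℕ∞) fun q : ℝ × X3 => q.2.1 := by fun_prop
  have h2 : ContDiff ℝ (⊤ : ℕ∞) fun q : ℝ × X3 => q.2.2.2 := by fun_prop
  have h3 : ContDiff ℝ (⊤ : ℕ∞) fun q : ℝ × X3 => 1 - q.1 := by fun_prop
  exact h2.sub (h3.smul (ContDiff.sum fun i _ =>
    (contDiff_perpC h1 h2 i).smul (contDiff_perpV h1 i)))

theorem contDiff_homotopyIntegrand (S : Finset (Fin 4)) (hQ : ∀ j, ContDiff ℝ (⊤ : ℕ∞) (Q j)) :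
    ContDiff ℝ (⊤ : ℕ∞) (Function.uncurry (homotopyIntegrand S Q)) := by
  have h1 : ContDiff ℝ (⊤ : ℕ∞) fun q : ℝ × X3 => q.2.1 := by fun_prop
  have h2 : ContDiff ℝ (⊤ : ℕ∞) fun q : ℝ × X3 => q.2.2.2 := by fun_prop
  refine ContDiff.sum fun j _ => ContDiff.mul (contDiff_perpC h1 h2 j) ?_
  have := contDiff_contr S
  exact (hQ j).comp ((contDiff_fst.comp contDiff_snd).prodMk
    ((contDiff_fst.comp (contDiff_snd.comp contDiff_snd)).prodMk this))

theorem dominated_homotopyIntegrand (S : Finset (Fin 4)) (hQ : ∀ j, ContDiff ℝ (⊤ : ℕ∞) (Q j)) :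
    Dominated (MeasureTheory.volume.restrict (Set.Ioc (0 : ℝ) 1)) (homotopyIntegrand S Q) :=
  Dominated.of_Ioc (contDiff_homotopyIntegrand S hQ) 0 1

theorem contDiff_homotopyOp (S : Finset (Fin 4)) (hQ : ∀ j, ContDiff ℝ (⊤ : ℕ∞) (Q j)) :
    ContDiff ℝ (⊤ : ℕ∞) (homotopyOp S Q) :=
  (dominated_homotopyIntegrand S hQ).contDiff

theorem add_smul_ez (θ s t : ℝ) (z v : E8) :
    ((θ, s, z) : X3) + t • ez v = (θ, s, z + t • v) := by
  simp [ez]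

theorem ez_add (u v : E8) : ez (u + v) = ez u + ez v := by simp [ez]

theorem ez_smul (c : ℝ) (v : E8) : ez (c • v) = c • ez v := by simp [ez]

theorem pdv_ez_sum {ι : Type} (s : Finset ι) (c : ι → ℝ) (v : ι → E8) (f : X3 → ℝ) (p : X3) :
    pdv (ez (∑ i ∈ s, c i • v i)) f p = ∑ i ∈ s, c i * pdv (ez (v i)) f p := by
  classical
  induction s using Finset.induction_on with
  | empty => exact pdv_zero_vec p f
  | insert a s ha ih =>
    rw [Finset.sum_insert ha, Finset.sum_insert ha, ez_add, pdv_add_vec, ez_smul, pdv_smul_vec, ih]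

theorem pdv_ez_perpV (θ : ℝ) (j : Fin 4) (f : X3 → ℝ) (p : X3) :
    pdv (ez (perpV θ j)) f p
      = -Real.sin θ * pdv (ez (dx j)) f p + Real.cos θ * pdv (ez (dy j)) f p := by
  rw [perpV, ez_add, ez_smul, ez_smul, pdv_add_vec, pdv_smul_vec, pdv_smul_vec]

theorem contr_add_smul (θ s τ t : ℝ) (z v : E8) :
    contr S τ (θ, s, z + t • v) = contr S τ (θ, s, z) + t • contr S τ (θ, s, v) := by
  simp only [contr, perpC_add_smul, add_smul, Finset.sum_add_distrib, mul_smul, ← Finset.smul_sum]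
  module

theorem pdv_homotopyIntegrand (hQ : ∀ j, ContDiff ℝ (⊤ : ℕ∞) (Q j)) (τ θ s : ℝ) (z v : E8) :
    pdv (ez v) (homotopyIntegrand S Q τ) (θ, s, z)
      = ∑ j ∈ S, (perpC θ j z *
          pdv (ez (contr S τ (θ, s, v))) (Q j) (θ, s, contr S τ (θ, s, z))
          + perpC θ j v * Q j (θ, s, contr S τ (θ, s, z))) := by
  refine pdv_eq_of_hasDerivAt
    ((dominated_homotopyIntegrand S hQ).smooth τ).smooth_differentiable ?_
  simp only [homotopyIntegrand, add_smul_ez, contr_add_smul, perpC_add_smul]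
  simp only [← add_smul_ez θ s]
  refine HasDerivAt.fun_sum fun j _ => ?_
  have h1 := hasDerivAt_line (hQ j).smooth_differentiable (θ, s, contr S τ (θ, s, z))
    (ez (contr S τ (θ, s, v))) 0
  have h2 : HasDerivAt (fun t : ℝ => perpC θ j z + t * perpC θ j v) (perpC θ j v) 0 := by
    simpa using ((hasDerivAt_id (0 : ℝ)).mul_const (perpC θ j v)).const_add (perpC θ j z)
  refine (h2.fun_mul h1).congr_deriv ?_
  simp only [zero_smul, add_zero, zero_mul]
  ring

theorem contr_perpV {i : Fin 4} (hi : i ∈ S) (τ θ s : ℝ) :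
    contr S τ (θ, s, perpV θ i) = τ • perpV θ i := by
  simp only [contr, perpC_perpV, ite_smul, one_smul, zero_smul, Finset.sum_ite_eq', hi, if_true]
  module

theorem pdv_perpV_homotopyOp (hQ : IsClosedFamily S k Q) {i : Fin 4} (hi : i ∈ S) (p : X3) :
    pdv (ez (perpV p.1 i)) (homotopyOp S Q) p = Q i p := by
  obtain ⟨θ, s, z⟩ := p
  have hd := dominated_homotopyIntegrand S hQ.smooth
  unfold homotopyOp
  rw [hd.pdv_integral]
  set b : E8 := ∑ i ∈ S, perpC θ i z • perpV θ i with hb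
  have key : ∀ τ : ℝ, HasDerivAt (fun τ : ℝ => τ * Q i ((θ, s, z - b) + τ • ez b))
      (pdv (ez (perpV θ i)) (homotopyIntegrand S Q τ) (θ, s, z)) τ := by
    intro τ
    have h1 := (hasDerivAt_id τ).fun_mul
      (hasDerivAt_line (hQ.smooth i).smooth_differentiable (θ, s, z - b) (ez b) τ)
    refine h1.congr_deriv ?_
    rw [pdv_homotopyIntegrand hQ.smooth]
    have hc : contr S τ (θ, s, z) = z - b + τ • b := by
      simp only [contr, ← hb]
      module
    simp only [contr_perpV hi, hc, add_smul_ez, perpC_perpV]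
    rw [hb, pdv_ez_sum, ← hb, Finset.sum_add_distrib]
    simp only [ite_mul, one_mul, zero_mul, Finset.sum_ite_eq', hi, if_true, id, Finset.mul_sum]
    rw [add_comm]
    congr 1
    refine Finset.sum_congr rfl fun j hj => ?_
    rw [ez_smul, pdv_smul_vec, pdv_ez_perpV, pdv_ez_perpV, hQ.closed_x i hi j hj,
      hQ.closed_y i hi j hj]
    ring
  have hcont : Continuous fun τ => pdv (ez (perpV θ i)) (homotopyIntegrand S Q τ) (θ, s, z) := by
    have := contDiff_fderiv_param (contDiff_homotopyIntegrand S hQ.smooth)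
    exact (this.continuous.comp (Continuous.prodMk_left (θ, s, z))).clm_apply continuous_const
  have := intervalIntegral.integral_eq_sub_of_hasDerivAt (a := 0) (b := 1) (fun τ _ => key τ)
    (hcont.intervalIntegrable _ _)
  rw [intervalIntegral.integral_of_le zero_le_one] at this
  simp only
  rw [this]
  simp [ez]

theorem pdv_homotopyOp_eq_zero (hQ : ∀ j, ContDiff ℝ (⊤ : ℕ∞) (Q j)) {v : E8}
    (hv : ∀ θ, ∀ i ∈ S, perpC θ i v = 0) (h : ∀ j, pdv (ez v) (Q j) = fun _ => 0) :
    pdv (ez v) (homotopyOp S Q) = fun _ => 0 := by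
  funext ⟨θ, s, z⟩
  unfold homotopyOp
  rw [(dominated_homotopyIntegrand S hQ).pdv_integral]
  have hc : ∀ τ, contr S τ (θ, s, v) = v := fun τ => by
    simp only [contr]
    rw [Finset.sum_eq_zero fun i hi => by rw [hv θ i hi, zero_smul]]
    simp
  have : ∀ τ, pdv (ez v) (homotopyIntegrand S Q τ) (θ, s, z) = 0 := fun τ => by
    rw [pdv_homotopyIntegrand hQ]
    refine Finset.sum_eq_zero fun j hj => ?_
    rw [hc, h j, hv θ j hj]
    simp
  simp [this]

end Homotopy

section Superposition

open Real

/-- The point of `X3` over `z` at angle `θ`, whose second coordinate is the component of the `k`-th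
plane of `z` in the direction `θ`. -/
def emb (k : Fin 4) (θ : ℝ) (z : E8) : X3 := (θ, cos θ * z.1 k + sin θ * z.2 k, z)

/-- Superposition over all angles. -/
def superpose (k : Fin 4) (F : X3 → ℝ) (z : E8) : ℝ :=
  ∫ θ in Set.Ioc (0 : ℝ) (2 * π), F (emb k θ z)

theorem contDiff_emb (k : Fin 4) : ContDiff ℝ (⊤ : ℕ∞) (Function.uncurry (emb k)) := by
  unfold emb
  fun_prop

theorem dominated_emb (k : Fin 4) {F : X3 → ℝ} (hF : ContDiff ℝ (⊤ : ℕ∞) F) :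
    Dominated (MeasureTheory.volume.restrict (Set.Ioc (0 : ℝ) (2 * π)))
      (fun θ z => F (emb k θ z)) :=
  Dominated.of_Ioc (f := fun θ z => F (emb k θ z)) (hF.comp (contDiff_emb k)) _ _

theorem contDiff_superpose (k : Fin 4) {F : X3 → ℝ} (hF : ContDiff ℝ (⊤ : ℕ∞) F) :
    ContDiff ℝ (⊤ : ℕ∞) (superpose k F) :=
  (dominated_emb k hF).contDiff

theorem pdv_emb (k : Fin 4) {F : X3 → ℝ} (hF : ContDiff ℝ (⊤ : ℕ∞) F) (θ : ℝ) (v : E8) :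
    pdv v (fun z => F (emb k θ z)) = fun z =>
      (cos θ * v.1 k + sin θ * v.2 k) * pdv es F (emb k θ z) + pdv (ez v) F (emb k θ z) := by
  funext z
  refine pdv_eq_of_hasDerivAt (((dominated_emb k hF).smooth θ).smooth_differentiable) ?_
  have h : ∀ t : ℝ, emb k θ (z + t • v)
      = emb k θ z + t • ((cos θ * v.1 k + sin θ * v.2 k) • es + ez v) := by
    intro t
    simp [emb, es, ez]
    ring
  simp only [h]
  refine (hasDerivAt_line hF.smooth_differentiable _ _ 0).congr_deriv ?_
  rw [zero_smul, add_zero, pdv_add_vec, pdv_smul_vec]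

theorem pdv_superpose (k : Fin 4) {F : X3 → ℝ} (hF : ContDiff ℝ (⊤ : ℕ∞) F) (v : E8) (z : E8) :
    pdv v (superpose k F) z = ∫ θ in Set.Ioc (0 : ℝ) (2 * π),
      ((cos θ * v.1 k + sin θ * v.2 k) * pdv es F (emb k θ z) + pdv (ez v) F (emb k θ z)) := by
  unfold superpose
  rw [(dominated_emb k hF).pdv_integral]
  simp only [pdv_emb k hF]

theorem pdv_pdv_superpose (k : Fin 4) {F : X3 → ℝ} (hF : ContDiff ℝ (⊤ : ℕ∞) F) (u v : E8)
    (hv : v.1 k = 0) (hv' : v.2 k = 0) (z : E8) :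
    pdv u (pdv v (superpose k F)) z = ∫ θ in Set.Ioc (0 : ℝ) (2 * π),
      ((cos θ * u.1 k + sin θ * u.2 k) * pdv es (pdv (ez v) F) (emb k θ z)
        + pdv (ez u) (pdv (ez v) F) (emb k θ z)) := by
  have : pdv v (superpose k F) = superpose k (pdv (ez v) F) := by
    funext z
    rw [pdv_superpose k hF]
    simp [hv, hv', superpose]
  rw [this, pdv_superpose k (hF.pdv _)]

theorem integrable_emb (k : Fin 4) {F : ℝ → X3 → ℝ} (hF : Continuous (Function.uncurry F))
    (z : E8) :
    MeasureTheory.IntegrableOn (fun θ => F θ (emb k θ z)) (Set.Ioc (0 : ℝ) (2 * π)) := by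
  have h1 : Continuous fun θ : ℝ => emb k θ z :=
    (contDiff_emb k).continuous.comp (Continuous.prodMk_left z)
  exact ((hF.comp (continuous_id.prodMk h1)).integrableOn_Icc).mono_set Set.Ioc_subset_Icc_self

variable {S : Finset (Fin 4)} {k : Fin 4} {Q : Fin 4 → X3 → ℝ}

theorem homotopyOp_eq (hQ : IsClosedFamily S k Q) {j : Fin 4} (hj : j ∈ S) :
    (fun p : X3 => -sin p.1 * pdv (ez (dx j)) (homotopyOp S Q) p
      + cos p.1 * pdv (ez (dy j)) (homotopyOp S Q) p) = Q j := by
  funext p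
  rw [← pdv_perpV_homotopyOp hQ hj p, pdv_ez_perpV]

theorem pdv_rotated {F G : X3 → ℝ} (hF : ContDiff ℝ (⊤ : ℕ∞) F) (hG : ContDiff ℝ (⊤ : ℕ∞) G)
    {v : X3} (hv : v.1 = 0) (p : X3) :
    pdv v (fun p : X3 => -sin p.1 * F p + cos p.1 * G p) p
      = -sin p.1 * pdv v F p + cos p.1 * pdv v G p := by
  have hl : ∀ t : ℝ, (p + t • v).1 = p.1 := fun t => by simp [hv]
  refine pdv_eq_of_hasDerivAt ?_ ?_
  · exact ContDiff.smooth_differentiable (by fun_prop)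
  · simp only [hl]
    refine (((hasDerivAt_line hF.smooth_differentiable p v 0).const_mul _).fun_add
      ((hasDerivAt_line hG.smooth_differentiable p v 0).const_mul _)).congr_deriv ?_
    simp

theorem pdv_homotopyOp_rotated (hQ : IsClosedFamily S k Q) {j : Fin 4} (hj : j ∈ S) {v : X3}
    (hv : v.1 = 0) (p : X3) :
    -sin p.1 * pdv v (pdv (ez (dx j)) (homotopyOp S Q)) p
      + cos p.1 * pdv v (pdv (ez (dy j)) (homotopyOp S Q)) p = pdv v (Q j) p := by
  have hL := contDiff_homotopyOp S hQ.smooth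
  rw [← pdv_rotated (hL.pdv _) (hL.pdv _) hv, homotopyOp_eq hQ hj]

theorem pairOp_superpose_homotopyOp (hQ : IsClosedFamily S k Q) (hk : k ∉ S) {j : Fin 4}
    (hj : j ∈ S) (z : E8) :
    pairOp k j (superpose k (homotopyOp S Q)) z
      = ∫ θ in Set.Ioc (0 : ℝ) (2 * π), pdv es (Q j) (emb k θ z) := by
  have hL := contDiff_homotopyOp S hQ.smooth
  have hS := contDiff_superpose k hL
  have hjk : j ≠ k := fun h => hk (h ▸ hj)
  have hx : pdv (ez (dx k)) (homotopyOp S Q) = fun _ => 0 :=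
    pdv_homotopyOp_eq_zero hQ.smooth (fun θ i hi => by
      have : i ≠ k := fun h => hk (h ▸ hi)
      simp [perpC, dx, this]) hQ.indep_x
  have hy : pdv (ez (dy k)) (homotopyOp S Q) = fun _ => 0 :=
    pdv_homotopyOp_eq_zero hQ.smooth (fun θ i hi => by
      have : i ≠ k := fun h => hk (h ▸ hi)
      simp [perpC, dy, this]) hQ.indep_y
  have hxk : ∀ v : E8, pdv (ez (dx k)) (pdv (ez v) (homotopyOp S Q)) = fun _ => 0 := fun v => by
    rw [pdv_comm hL, hx, pdv_fun_zero]
  have hyk : ∀ v : E8, pdv (ez (dy k)) (pdv (ez v) (homotopyOp S Q)) = fun _ => 0 := fun v => by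
    rw [pdv_comm hL, hy, pdv_fun_zero]
  have hcont : ∀ v : E8, Continuous (pdv es (pdv (ez v) (homotopyOp S Q))) := fun v =>
    ((hL.pdv _).pdv _).continuous
  rw [pairOp, pdv_comm hS (dx j) (dy k),
    pdv_pdv_superpose k hL _ _ (by simp [dy]) (by simp [dy, hjk.symm]),
    pdv_pdv_superpose k hL _ _ (by simp [dx, hjk.symm]) (by simp [dx])]
  simp only [hxk, hyk]
  rw [← MeasureTheory.integral_sub]
  · refine MeasureTheory.integral_congr_ae (Filter.Eventually.of_forall fun θ => ?_)
    have := pdv_homotopyOp_rotated hQ hj (v := es) rfl (emb k θ z)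
    simp only [emb, dx, dy] at this ⊢
    simp
    linarith
  · refine integrable_emb k (F := fun θ p => (cos θ * (dx k).1 k + sin θ * (dx k).2 k)
      * pdv es (pdv (ez (dy j)) (homotopyOp S Q)) p + 0) ?_ z
    have := (hcont (dy j)).comp (continuous_snd : Continuous fun q : ℝ × X3 => q.2)
    simp only [Function.comp_def] at this
    simp only [Function.uncurry_def]
    fun_prop
  · refine integrable_emb k (F := fun θ p => (cos θ * (dy k).1 k + sin θ * (dy k).2 k)
      * pdv es (pdv (ez (dx j)) (homotopyOp S Q)) p + 0) ?_ z
    have := (hcont (dx j)).comp (continuous_snd : Continuous fun q : ℝ × X3 => q.2)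
    simp only [Function.comp_def] at this
    simp only [Function.uncurry_def]
    fun_prop

theorem pairOp_superpose_homotopyOp_eq_zero (hQ : IsClosedFamily S k Q) (hk : k ∉ S)
    {i j : Fin 4} (hi : i ∈ S) (hj : j ∈ S) (z : E8) :
    pairOp i j (superpose k (homotopyOp S Q)) z = 0 := by
  have hL := contDiff_homotopyOp S hQ.smooth
  have hik : i ≠ k := fun h => hk (h ▸ hi)
  have hjk : j ≠ k := fun h => hk (h ▸ hj)
  rw [pairOp, pdv_pdv_superpose k hL _ _ (by simp [dy]) (by simp [dy, hjk.symm]),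
    pdv_pdv_superpose k hL _ _ (by simp [dy]) (by simp [dy, hik.symm]), sub_eq_zero]
  refine MeasureTheory.integral_congr_ae (Filter.Eventually.of_forall fun θ => ?_)
  set p := emb k θ z with hp
  have h1 := pdv_homotopyOp_rotated hQ hj (v := ez (dx i)) rfl p
  have h2 := pdv_homotopyOp_rotated hQ hi (v := ez (dx j)) rfl p
  have h3 := pdv_homotopyOp_rotated hQ hj (v := ez (dy i)) rfl p
  have h4 := pdv_homotopyOp_rotated hQ hi (v := ez (dy j)) rfl p
  rw [hQ.closed_x i hi j hj, ← h2, pdv_comm hL (ez (dx i)) (ez (dx j))] at h1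
  rw [hQ.closed_y i hi j hj, ← h4, pdv_comm hL (ez (dy i)) (ez (dy j)),
    pdv_comm hL (ez (dy i)) (ez (dx j)), pdv_comm hL (ez (dy j)) (ez (dx i))] at h3
  have hsc := sin_sq_add_cos_sq p.1
  have e1 : (dx i).1 k = 0 := by simp [dx, hik.symm]
  have e2 : (dx i).2 k = 0 := by simp [dx]
  have e3 : (dx j).1 k = 0 := by simp [dx, hjk.symm]
  have e4 : (dx j).2 k = 0 := by simp [dx]
  simp only [e1, e2, e3, e4, mul_zero, add_zero, zero_mul, zero_add, ← hp]
  linear_combination cos p.1 * h1 + sin p.1 * h3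
    - (pdv (ez (dx i)) (pdv (ez (dy j)) (homotopyOp S Q)) p
      - pdv (ez (dx j)) (pdv (ez (dy i)) (homotopyOp S Q)) p) * hsc

end Superposition

section LogKernel

open MeasureTheory Set Real

theorem locallyIntegrable_log_fst : LocallyIntegrable fun q : ℝ × ℝ => log q.1 := by
  refine (locallyIntegrable_iff).2 fun K hK => ?_
  obtain ⟨R, hR⟩ := hK.isBounded.subset_closedBall 0
  have hlog : IntegrableOn log (Icc (-R) R) :=
    (integrableOn_Icc_iff_integrableOn_Ioc (by simp)).2
      (intervalIntegral.intervalIntegrable_log' (a := -R) (b := R)).1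
  have h : IntegrableOn (fun q : ℝ × ℝ => log q.1) (Icc (-R) R ×ˢ Icc (-R) R) := by
    have : IsFiniteMeasure (volume.restrict (Icc (-R) R)) := ⟨by simp⟩
    rw [IntegrableOn, Measure.volume_eq_prod, ← Measure.prod_restrict]
    exact hlog.comp_fst _
  refine h.mono_set fun q hq => ?_
  have := hR hq
  simp only [mem_closedBall_zero_iff, Prod.norm_def, sup_le_iff, Real.norm_eq_abs, abs_le] at this
  exact ⟨this.1, this.2⟩

theorem integrable_prod_of_compact {T : Type} [MeasurableSpace T] [NormedAddCommGroup T]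
    [NormedSpace ℝ T] [FiniteDimensional ℝ T] [BorelSpace T] {μ : Measure T} [SFinite μ]
    {κ : T → ℝ} (hκ : LocallyIntegrable κ μ) {F : ℝ × T → ℝ} (hF : Continuous F) {K : Set T}
    (hK : IsCompact K) (a b : ℝ) (h0 : ∀ t ∈ Ioc a b, ∀ x ∉ K, F (t, x) = 0) :
    Integrable (fun q : ℝ × T => κ q.2 * F q) ((volume.restrict (Ioc a b)).prod μ) := by
  have : ProperSpace T := FiniteDimensional.proper ℝ T
  obtain ⟨C, hC⟩ := ((isCompact_Icc (a := a) (b := b)).prod hK).exists_bound_of_continuousOn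
    hF.continuousOn
  have hi : Integrable (fun x => K.indicator (fun x => ‖κ x‖ * C) x) μ :=
    (integrable_indicator_iff hK.measurableSet).2
      ((hκ.integrableOn_isCompact hK).norm.mul_const C)
  refine (hi.comp_snd (volume.restrict (Ioc a b))).mono' ?_ ?_
  · exact (hκ.aestronglyMeasurable.comp_snd).mul hF.aestronglyMeasurable
  · have : ∀ᵐ q ∂((volume.restrict (Ioc a b)).prod μ), q.1 ∈ Ioc a b :=
      Measure.quasiMeasurePreserving_fst.ae (ae_restrict_mem measurableSet_Ioc)
    filter_upwards [this] with q hq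
    by_cases hx : q.2 ∈ K
    · rw [indicator_of_mem hx, norm_mul]
      exact mul_le_mul_of_nonneg_left (hC q ⟨Ioc_subset_Icc_self hq, hx⟩) (norm_nonneg _)
    · rw [indicator_of_notMem hx]
      have := h0 q.1 hq q.2 hx
      simp only [Prod.mk.eta] at this
      simp [this]

theorem integral_log_mul_deriv {f f' : ℝ → ℝ} {m : ℝ → ℝ} (hf : ∀ a, HasDerivAt f (f' a) a)
    (hf' : Continuous f') (hm : Continuous m) (hfm : ∀ a, f a = a * m a) {R : ℝ}
    (hR : ∀ a, R ≤ |a| → m a = 0) : ∫ a, log a * f' a = -∫ a, m a := by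
  set r : ℝ := |R| + 1 with hr
  have hr0 : 0 < r := by positivity
  have hRr : R < r := lt_of_le_of_lt (le_abs_self R) (by linarith)
  have hm0 : ∀ a, r ≤ |a| → m a = 0 := fun a ha => hR a (by linarith)
  have hf'0 : ∀ a, r < |a| → f' a = 0 := fun a ha => by
    have : f =ᶠ[nhds a] fun _ => 0 := by
      filter_upwards [(isOpen_lt continuous_const continuous_abs).mem_nhds ha] with x hx
      rw [hfm, hm0 x (le_of_lt hx), mul_zero]
    exact (hf a).unique ((hasDerivAt_const a (0 : ℝ)).congr_of_eventuallyEq this)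
  have hI : IntervalIntegrable (fun a => log a * f' a) volume (-r) r :=
    intervalIntegral.intervalIntegrable_log'.mul_continuousOn hf'.continuousOn
  have h2 : IntervalIntegrable m volume (-r) r := hm.intervalIntegrable _ _
  have key := integral_eq_of_hasDerivAt_off_countable (fun a => a * log a * m a)
    (fun a => log a * f' a + m a) (a := -r) (b := r) (s := {0}) (countable_singleton 0)
    (by have := Real.continuous_mul_log; fun_prop) (fun a ha => by
      have ha0 : a ≠ 0 := fun h => ha.2 (by simp [h])
      have h := (Real.hasDerivAt_log ha0).fun_mul (hf a)
      have h3 : (fun a => a * log a * m a) = fun a => log a * f a := by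
        funext x
        rw [hfm]
        ring
      rw [h3]
      refine h.congr_deriv ?_
      rw [hfm]
      field_simp
      ring) (hI.add h2)
  rw [intervalIntegral.integral_add hI h2, hm0 r (le_abs_self r),
    hm0 (-r) (by rw [abs_neg]; exact le_abs_self r)] at key
  rw [intervalIntegral.integral_eq_integral_of_support_subset,
    intervalIntegral.integral_eq_integral_of_support_subset] at key
  · linarith
  · intro a ha
    by_contra h
    refine ha (hm0 a ?_)
    by_contra h1
    exact h ⟨(abs_lt.1 (not_le.1 h1)).1, (abs_lt.1 (not_le.1 h1)).2.le⟩
  · intro a ha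
    by_contra h
    have h1 : r ≤ |a| := by
      by_contra h1
      exact h ⟨(abs_lt.1 (not_le.1 h1)).1, (abs_lt.1 (not_le.1 h1)).2.le⟩
    rcases h1.lt_or_eq with h1 | h1
    · exact ha (by simp [hf'0 a h1])
    · rcases abs_choice a with h2 | h2
      · rw [h2] at h1
        exact h ⟨by linarith, h1.ge⟩
      · have : f' a = 0 := by
          have hcl : a ∈ closure (Iio (-r)) := by
            rw [closure_Iio]
            simp only [mem_Iic]
            linarith
          have : IsClosed {x | f' x = 0} := isClosed_eq hf' continuous_const
          refine this.closure_subset_iff.2 (fun x hx => ?_) hcl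
          refine hf'0 x ?_
          simp only [mem_Iio] at hx
          rw [abs_of_neg (by linarith)]
          linarith
        exact ha (by simp [this])

/-- Rotation of the plane. -/
def rot (φ : ℝ) (v : ℝ × ℝ) : ℝ × ℝ := (cos φ * v.1 - sin φ * v.2, sin φ * v.1 + cos φ * v.2)

theorem exists_polar (v : ℝ × ℝ) :
    ∃ φ : ℝ, v = (√(v.1 ^ 2 + v.2 ^ 2) * cos φ, √(v.1 ^ 2 + v.2 ^ 2) * sin φ) := by
  refine ⟨(⟨v.1, v.2⟩ : ℂ).arg, ?_⟩
  have h : ‖(⟨v.1, v.2⟩ : ℂ)‖ = √(v.1 ^ 2 + v.2 ^ 2) := by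
    rw [Complex.norm_def, Complex.normSq_mk, sq, sq]
  rw [← h, Complex.norm_mul_cos_arg, Complex.norm_mul_sin_arg]

section Radial

variable {G : ℝ × ℝ → ℝ}

theorem pdv_rot (hG : ContDiff ℝ (⊤ : ℕ∞) G) (hrot : ∀ φ v, G (rot φ v) = G v)
    (φ : ℝ) (u v : ℝ × ℝ) :
    pdv (rot φ u) G (rot φ v) = pdv u G v := by
  refine (pdv_eq_of_hasDerivAt hG.smooth_differentiable ?_).symm
  have h : ∀ t : ℝ, G (v + t • u) = G (rot φ v + t • rot φ u) := fun t => by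
    rw [← hrot φ]
    congr 1
    simp only [rot, Prod.fst_add, Prod.snd_add, Prod.smul_fst, Prod.smul_snd, Prod.smul_mk,
      Prod.mk_add_mk, smul_eq_mul, Prod.mk.injEq]
    constructor <;> ring
  simp only [h]
  simpa using hasDerivAt_line hG.smooth_differentiable (rot φ v) (rot φ u) 0

theorem pdv_radial_zero (hG : ContDiff ℝ (⊤ : ℕ∞) G) (hrot : ∀ φ v, G (rot φ v) = G v)
    (u : ℝ × ℝ) :
    pdv u G (0, 0) = 0 := by
  have := pdv_rot hG hrot π u (0, 0)
  have h1 : rot π u = (-1 : ℝ) • u := by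
    ext <;> simp [rot]
  have h2 : rot π (0, 0) = (0, 0) := by simp [rot]
  rw [h1, h2, pdv_smul_vec] at this
  linarith

theorem pdv_radial_tangential (hG : ContDiff ℝ (⊤ : ℕ∞) G) (hrot : ∀ φ v, G (rot φ v) = G v)
    (r : ℝ) :
    pdv (0, 1) G (r, 0) = 0 := by
  rcases eq_or_ne r 0 with rfl | hr
  · exact pdv_radial_zero hG hrot _
  have h1 : HasDerivAt (fun φ => G (rot φ (r, 0))) (pdv (0, r) G (r, 0)) 0 := by
    have h2 : HasDerivAt (fun φ => rot φ (r, 0)) (0, r) 0 := by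
      have ha : HasDerivAt (fun φ => cos φ * r - sin φ * 0) 0 0 := by
        simpa using (hasDerivAt_cos 0).mul_const r
      have hb : HasDerivAt (fun φ => sin φ * r + cos φ * 0) r 0 := by
        simpa using (hasDerivAt_sin 0).mul_const r
      exact ha.prodMk hb
    have h3 := (hG.smooth_differentiable (rot 0 (r, 0))).hasFDerivAt.comp_hasDerivAt 0 h2
    refine h3.congr_deriv ?_
    simp [rot, pdv]
  simp only [hrot] at h1
  have h2 := h1.unique (hasDerivAt_const _ _)
  have h3 : ((0, r) : ℝ × ℝ) = r • (0, 1) := by simp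
  rw [h3, pdv_smul_vec] at h2
  exact (mul_eq_zero.1 h2).resolve_left hr

theorem pdv_radial (hG : ContDiff ℝ (⊤ : ℕ∞) G) (hrot : ∀ φ v, G (rot φ v) = G v)
    (r φ : ℝ) :
        pdv (1, 0) G (r * cos φ, r * sin φ) = cos φ * pdv (1, 0) G (r, 0) := by
  have h := pdv_rot hG hrot φ (cos φ, -sin φ) (r, 0)
  have h1 : rot φ (cos φ, -sin φ) = (1, 0) := by
    have := sin_sq_add_cos_sq φ
    simp only [rot, Prod.mk.injEq]
    constructor
    · linarith
    · ring
  have h2 : rot φ (r, 0) = (r * cos φ, r * sin φ) := by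
    simp [rot, mul_comm]
  have h3 : ((cos φ, -sin φ) : ℝ × ℝ) = cos φ • (1, 0) + (-sin φ) • (0, 1) := by simp
  rw [h1, h2, h3, pdv_add_vec, pdv_smul_vec, pdv_smul_vec, pdv_radial_tangential hG hrot] at h
  linarith

theorem integral_log_radial (hG : ContDiff ℝ (⊤ : ℕ∞) G) (hrot : ∀ φ v, G (rot φ v) = G v)
    {M : ℝ} (hM : 0 < M) (hsupp : ∀ v, M ^ 2 ≤ v.1 ^ 2 + v.2 ^ 2 → G v = 0) :
    ∫ q : ℝ × ℝ, log q.1 * pdv (1, 0) (pdv (1, 0) G) q = 2 * π * G (0, 0) := by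
  set g : ℝ → ℝ := fun r => pdv (1, 0) G (r, 0) with hg
  set m : ℝ → ℝ := dslope g 0 with hm
  have hGd : ∀ r, HasDerivAt (fun r : ℝ => G (r, 0)) (g r) r := fun r => by
    have := hasDerivAt_line hG.smooth_differentiable (0, 0) (1, 0) r
    simpa using this
  have hgs : ContDiff ℝ (⊤ : ℕ∞) g := (hG.pdv _).comp (by fun_prop : ContDiff ℝ (⊤ : ℕ∞) fun r : ℝ =>
    ((r, 0) : ℝ × ℝ))
  have hg0 : g 0 = 0 := pdv_radial_zero hG hrot _
  have hgm : ∀ r, g r = r * m r := fun r => by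
    have := sub_smul_dslope g 0 r
    simp only [sub_zero, hg0, smul_eq_mul] at this
    exact this.symm
  have hmc : Continuous m := by
    rw [← continuousOn_univ]
    exact (continuousOn_dslope Filter.univ_mem).2
      ⟨hgs.continuous.continuousOn, hgs.smooth_differentiable.differentiableAt⟩
  have hGz : ∀ r : ℝ, M ≤ r → G (r, 0) = 0 := fun r hr => hsupp _ (by simp only; nlinarith)
  have hgz : ∀ r : ℝ, M ≤ r → g r = 0 := fun r hr => by
    have hcl : r ∈ closure (Ioi M) := by
      rw [closure_Ioi]
      exact hr
    refine (isClosed_eq hgs.continuous continuous_const).closure_subset_iff.2 (fun x hx => ?_) hcl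
    have : (fun r : ℝ => G (r, 0)) =ᶠ[nhds x] fun _ => 0 := by
      filter_upwards [isOpen_Ioi.mem_nhds hx] with y hy using hGz y (le_of_lt hy)
    exact (hGd x).unique ((hasDerivAt_const x (0 : ℝ)).congr_of_eventuallyEq this)
  have hmz : ∀ r : ℝ, M ≤ r → m r = 0 := fun r hr => by
    have := hgm r
    rw [hgz r hr] at this
    exact (mul_eq_zero.1 this.symm).resolve_left (by linarith)
  set H : ℝ × ℝ → ℝ := fun v => m (√(v.1 ^ 2 + v.2 ^ 2)) with hH
  have hHc : Continuous H := by fun_prop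
  have hHz : ∀ v : ℝ × ℝ, M ^ 2 ≤ v.1 ^ 2 + v.2 ^ 2 → H v = 0 := fun v hv =>
    hmz _ (Real.le_sqrt_of_sq_le hv)
  have hGH : ∀ v, pdv (1, 0) G v = v.1 * H v := fun v => by
    obtain ⟨φ, hφ⟩ := exists_polar v
    have h1 : pdv (1, 0) G v = cos φ * g √(v.1 ^ 2 + v.2 ^ 2) := by
      conv_lhs => rw [hφ]
      exact pdv_radial hG hrot _ _
    have h2 : v.1 = √(v.1 ^ 2 + v.2 ^ 2) * cos φ := congrArg Prod.fst hφ
    rw [h1, hgm]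
    simp only [hH]
    linear_combination (-m √(v.1 ^ 2 + v.2 ^ 2)) * h2
  have hcs : ∀ {F : ℝ × ℝ → ℝ}, (∀ v : ℝ × ℝ, M ^ 2 ≤ v.1 ^ 2 + v.2 ^ 2 → F v = 0) →
      HasCompactSupport F := fun {F} hF => by
    refine HasCompactSupport.intro (isCompact_closedBall (0 : ℝ × ℝ) M) fun v hv => hF v ?_
    simp only [mem_closedBall_zero_iff, Prod.norm_def, Real.norm_eq_abs, not_le, lt_sup_iff] at hv
    rcases hv with h | h
    · nlinarith [sq_abs v.1, sq_nonneg v.2]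
    · nlinarith [sq_abs v.2, sq_nonneg v.1]
  have hGcs : HasCompactSupport G := hcs hsupp
  have hlog : Integrable fun q : ℝ × ℝ => log q.1 * pdv (1, 0) (pdv (1, 0) G) q := by
    refine locallyIntegrable_log_fst.integrable_smul_right_of_hasCompactSupport
      ((hG.pdv _).pdv _).continuous ?_
    have h1 : HasCompactSupport (pdv (1, 0) G) := hGcs.fderiv_apply ℝ (v := (1, 0))
    exact h1.fderiv_apply ℝ (v := (1, 0))
  have hHint : Integrable H := hHc.integrable_of_hasCompactSupport (hcs hHz)
  have step : ∀ b : ℝ, ∫ a, log a * pdv (1, 0) (pdv (1, 0) G) (a, b) = -∫ a, H (a, b) := fun b => by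
    refine integral_log_mul_deriv (f := fun a => pdv (1, 0) G (a, b)) (fun a => ?_)
      (((hG.pdv _).pdv _).continuous.comp (by fun_prop)) (hHc.comp (by fun_prop))
      (fun a => hGH _) (R := M) (fun a ha => hHz _ ?_)
    · have := hasDerivAt_line (hG.pdv (1, 0)).smooth_differentiable (0, b) (1, 0) a
      simpa using this
    · simp only
      nlinarith [sq_abs a, sq_nonneg b]
  rw [Measure.volume_eq_prod] at hlog hHint ⊢
  rw [integral_prod_symm _ hlog]
  simp only [step]
  rw [integral_neg, ← integral_prod_symm _ hHint, ← Measure.volume_eq_prod,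
    ← integral_comp_polarCoord_symm, polarCoord_target]
  have h1 : ∫ p in Ioi (0 : ℝ) ×ˢ Ioo (-π) π, p.1 • H (polarCoord.symm p)
      = ∫ p in Ioi (0 : ℝ) ×ˢ Ioo (-π) π, g p.1 * (fun _ => (1 : ℝ)) p.2 := by
    refine setIntegral_congr_fun (measurableSet_Ioi.prod measurableSet_Ioo) fun p hp => ?_
    have hp1 : (0 : ℝ) < p.1 := hp.1
    simp only [polarCoord_symm_apply, hH, smul_eq_mul, mul_one]
    rw [show (p.1 * cos p.2) ^ 2 + (p.1 * sin p.2) ^ 2 = p.1 ^ 2 * (sin p.2 ^ 2 + cos p.2 ^ 2) by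
      ring, sin_sq_add_cos_sq, mul_one, Real.sqrt_sq hp1.le, hgm]
  have h3 := setIntegral_prod_mul (μ := (volume : Measure ℝ)) (ν := (volume : Measure ℝ)) g
    (fun _ => (1 : ℝ)) (Ioi 0) (Ioo (-π) π)
  rw [h1, Measure.volume_eq_prod, h3]
  have h2 : ∫ x in Ioi (0 : ℝ), g x = 0 - G (0, 0) := by
    refine integral_Ioi_of_hasDerivAt_of_tendsto (f := fun r : ℝ => G (r, 0))
      (hGd 0).continuousAt.continuousWithinAt (fun x _ => hGd x) ?_ ?_
    · rw [← Ioc_union_Ioi_eq_Ioi hM.le]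
      refine IntegrableOn.union ?_ ?_
      · exact hgs.continuous.integrableOn_Icc.mono_set Ioc_subset_Icc_self
      · exact (integrableOn_zero).congr_fun (fun x hx => (hgz x (le_of_lt hx)).symm)
          measurableSet_Ioi
    · refine tendsto_const_nhds.congr' ?_
      filter_upwards [Filter.eventually_ge_atTop M] with x hx using (hGz x hx).symm
  rw [h2]
  simp
  rw [max_eq_left (by positivity)]
  ring

end Radial

end LogKernel

section LogTransform

open MeasureTheory Set Real

/-- The affine isometry of the plane onto coordinates adapted to the line of direction `θ`. -/
def line (θ s : ℝ) (q : ℝ × ℝ) : ℝ × ℝ := rot θ (s - q.1, q.2)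

/-- The logarithmic potential transform in the plane, depending on the parameter `p.2.2`. -/
def logT (g : (ℝ × ℝ) × E8 → ℝ) (p : X3) : ℝ :=
  ∫ q : ℝ × ℝ, log q.1 * g (line p.1 p.2.1 q, p.2.2)

theorem rot_sq (φ : ℝ) (v : ℝ × ℝ) : (rot φ v).1 ^ 2 + (rot φ v).2 ^ 2 = v.1 ^ 2 + v.2 ^ 2 := by
  have := sin_sq_add_cos_sq φ
  simp only [rot]
  linear_combination (v.1 ^ 2 + v.2 ^ 2) * this

theorem rot_rot (φ ψ : ℝ) (v : ℝ × ℝ) : rot φ (rot ψ v) = rot (φ + ψ) v := by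
  simp only [rot, cos_add, sin_add, Prod.mk.injEq]
  constructor <;> ring

theorem contDiff_line : ContDiff ℝ (⊤ : ℕ∞) fun q : (ℝ × ℝ) × (ℝ × ℝ) => line q.1.1 q.1.2 q.2 := by
  unfold line rot
  fun_prop

/-- Smooth functions whose support in the planar variable lies in a disc of radius `M`. -/
structure PlanarSupport (M : ℝ) (g : (ℝ × ℝ) × E8 → ℝ) : Prop where
  smooth : ContDiff ℝ (⊤ : ℕ∞) g
  supp : ∀ v z, M ^ 2 ≤ v.1 ^ 2 + v.2 ^ 2 → g (v, z) = 0

variable {M : ℝ} {g : (ℝ × ℝ) × E8 → ℝ}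

theorem PlanarSupport.line_eq_zero (hg : PlanarSupport M g) {θ s : ℝ} {q : ℝ × ℝ}
    (hq : q ∉ Metric.closedBall 0 (|s| + |M|)) (z : E8) : g (line θ s q, z) = 0 := by
  refine hg.supp _ _ ?_
  rw [line, rot_sq]
  simp only [mem_closedBall_zero_iff, Prod.norm_def, Real.norm_eq_abs, not_le, lt_sup_iff] at hq ⊢
  rw [← sq_abs M]
  rcases hq with h | h
  · have h1 : |M| ≤ |s - q.1| := by
      have := abs_sub_abs_le_abs_sub q.1 s
      rw [abs_sub_comm] at this
      linarith
    nlinarith [sq_abs (s - q.1), sq_nonneg q.2, abs_nonneg M]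
  · nlinarith [sq_abs q.2, sq_nonneg (s - q.1), abs_nonneg M, abs_nonneg s]

theorem PlanarSupport.contDiff_line (hg : PlanarSupport M g) :
    ContDiff ℝ (⊤ : ℕ∞) (Function.uncurry fun (q : ℝ × ℝ) (p : X3) => g (line p.1 p.2.1 q, p.2.2)) := by
  have h1 : ContDiff ℝ (⊤ : ℕ∞) fun x : (ℝ × ℝ) × X3 => ((x.2.1, x.2.2.1), x.1) := by fun_prop
  have h2 := _root_.contDiff_line.comp h1
  have h3 : ContDiff ℝ (⊤ : ℕ∞) fun x : (ℝ × ℝ) × X3 => x.2.2.2 := by fun_prop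
  exact hg.smooth.comp (h2.prodMk h3)

theorem PlanarSupport.dominated (hg : PlanarSupport M g) :
    Dominated volume fun (q : ℝ × ℝ) (p : X3) => log q.1 * g (line p.1 p.2.1 q, p.2.2) := by
  have h := Dominated.of_compact (f := fun (q : ℝ × ℝ) (p : X3) => g (line p.1 p.2.1 q, p.2.2))
    (κ := fun q : ℝ × ℝ => log q.1) hg.contDiff_line locallyIntegrable_log_fst (fun R =>
    ⟨Metric.closedBall 0 (R + |M|), isCompact_closedBall _ _,
      Filter.Eventually.of_forall fun q hq p hp => hg.line_eq_zero (fun h => hq ?_) _⟩)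
  · exact h
  · refine Metric.closedBall_subset_closedBall ?_ h
    have : |p.2.1| ≤ ‖p‖ := (norm_fst_le p.2).trans (norm_snd_le p)
    linarith

theorem PlanarSupport.contDiff_logT (hg : PlanarSupport M g) : ContDiff ℝ (⊤ : ℕ∞) (logT g) :=
  hg.dominated.contDiff

theorem PlanarSupport.pdv (hg : PlanarSupport M g) (v : E8) : PlanarSupport M (pdv (0, v) g) where
  smooth := hg.smooth.pdv _
  supp w z hw := by
    refine pdv_eq_of_hasDerivAt hg.smooth.smooth_differentiable ?_
    have : ∀ t : ℝ, g ((w, z) + t • (0, v)) = 0 := fun t => by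
      simpa using hg.supp w (z + t • v) hw
    simp only [this]
    exact hasDerivAt_const _ _

theorem PlanarSupport.pdv_logT (hg : PlanarSupport M g) (v : E8) :
    _root_.pdv (ez v) (logT g) = logT (_root_.pdv (0, v) g) := by
  unfold logT
  rw [hg.dominated.pdv_integral]
  funext p
  refine integral_congr_ae (Filter.Eventually.of_forall fun q => ?_)
  refine pdv_eq_of_hasDerivAt (hg.dominated.smooth q).smooth_differentiable ?_
  refine HasDerivAt.const_mul _ ?_
  have := hasDerivAt_line hg.smooth.smooth_differentiable (line p.1 p.2.1 q, p.2.2) (0, v) 0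
  simpa [ez] using this

theorem pdv_es_line {g : (ℝ × ℝ) × E8 → ℝ} (hg : ContDiff ℝ (⊤ : ℕ∞) g) (c : ℝ) (θ s : ℝ) (z : E8)
    (q : ℝ × ℝ) (hd : Differentiable ℝ fun p : X3 => c * g (line p.1 p.2.1 q, p.2.2)) :
    _root_.pdv es (fun p : X3 => c * g (line p.1 p.2.1 q, p.2.2)) (θ, s, z)
      = c * _root_.pdv (rot θ (1, 0), 0) g (line θ s q, z) := by
  refine pdv_eq_of_hasDerivAt hd ?_
  refine HasDerivAt.const_mul _ ?_
  have := hasDerivAt_line hg.smooth_differentiable (line θ s q, z) (rot θ (1, 0), 0) 0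
  have h : ∀ t : ℝ, line θ (s + t) q = line θ s q + t • rot θ (1, 0) := fun t => by
    simp only [line, rot, Prod.smul_mk, Prod.mk_add_mk, smul_eq_mul, Prod.mk.injEq]
    constructor <;> ring
  simpa [es, h] using this

end LogTransform

section RadonInversion

open MeasureTheory Set Real

theorem setIntegral_Ioc_add_const {f : ℝ → ℝ} (hf : Function.Periodic f (2 * π)) (c : ℝ) :
    ∫ θ in Ioc 0 (2 * π), f (θ + c) = ∫ θ in Ioc 0 (2 * π), f θ := by
  have h := hf.intervalIntegral_add_eq (0 + c) 0
  rw [← intervalIntegral.integral_of_le (by positivity),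
    ← intervalIntegral.integral_of_le (by positivity),
    intervalIntegral.integral_comp_add_right (f := f)]
  rw [zero_add] at h
  rw [zero_add, add_comm, h, zero_add]

variable {M : ℝ} {g : (ℝ × ℝ) × E8 → ℝ}

theorem PlanarSupport.pdv_es_pdv_es_logT (hg : PlanarSupport M g) (θ s : ℝ) (z : E8) :
    _root_.pdv es (_root_.pdv es (logT g)) (θ, s, z) = ∫ q : ℝ × ℝ, log q.1 *
      _root_.pdv (rot θ (1, 0), 0) (_root_.pdv (rot θ (1, 0), 0) g) (line θ s q, z) := by
  have hd := hg.dominated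
  unfold logT
  rw [hd.pdv_integral, (hd.pdv es).pdv_integral]
  refine integral_congr_ae (Filter.Eventually.of_forall fun q => ?_)
  refine pdv_eq_of_hasDerivAt ((hd.pdv es).smooth q).smooth_differentiable ?_
  have h : ∀ t : ℝ, ((θ, s, z) : X3) + t • es = (θ, s + t, z) := fun t => by simp [es]
  have h2 : ∀ t : ℝ, line θ (s + t) q = line θ s q + t • rot θ (1, 0) := fun t => by
    simp only [line, rot, Prod.smul_mk, Prod.mk_add_mk, smul_eq_mul, Prod.mk.injEq]
    constructor <;> ring
  simp only [h]
  simp only [pdv_es_line hg.smooth (log q.1) θ _ z q (hd.smooth q).smooth_differentiable]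
  refine HasDerivAt.const_mul _ ?_
  have := hasDerivAt_line (hg.smooth.pdv (rot θ (1, 0), 0)).smooth_differentiable
    (line θ s q, z) (rot θ (1, 0), 0) 0
  simpa [h2] using this

theorem pdv_slice {E E' : Type} [NormedAddCommGroup E] [NormedSpace ℝ E] [NormedAddCommGroup E']
    [NormedSpace ℝ E'] {g : E × E' → ℝ} (hg : ContDiff ℝ (⊤ : ℕ∞) g) (u : E) (z : E') (v : E) :
    pdv (u, 0) g (v, z) = pdv u (fun v => g (v, z)) v := by
  refine (pdv_eq_of_hasDerivAt (ContDiff.smooth_differentiable (by fun_prop)) ?_).symm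
  have := hasDerivAt_line hg.smooth_differentiable (v, z) (u, 0) 0
  simpa using this

/-- Inversion of the logarithmic potential transform in the plane. -/
theorem integral_log_inversion {f : ℝ × ℝ → ℝ} (hf : ContDiff ℝ (⊤ : ℕ∞) f)
    (hs : ∀ v : ℝ × ℝ, M ^ 2 ≤ v.1 ^ 2 + v.2 ^ 2 → f v = 0) (w : ℝ × ℝ) :
    ∫ θ in Ioc (0 : ℝ) (2 * π), ∫ q : ℝ × ℝ, log q.1 *
      pdv (rot θ (1, 0)) (pdv (rot θ (1, 0)) f) (line θ (cos θ * w.1 + sin θ * w.2) q)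
      = 4 * π ^ 2 * f w := by
  set C : ℝ := 2 * (M ^ 2 + (w.1 ^ 2 + w.2 ^ 2)) + 1 with hC
  have hC1 : 1 ≤ C := by nlinarith [sq_nonneg M, sq_nonneg w.1, sq_nonneg w.2]
  set A : ℝ → ℝ × ℝ → ℝ × ℝ := fun θ q => w + rot θ (-q.1, q.2) with hA
  have hAs : ContDiff ℝ (⊤ : ℕ∞) (Function.uncurry A) := by
    simp only [hA, rot, Function.uncurry_def]
    fun_prop
  have hAC : ∀ θ q, C ^ 2 ≤ q.1 ^ 2 + q.2 ^ 2 → M ^ 2 < (A θ q).1 ^ 2 + (A θ q).2 ^ 2 := by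
    intro θ q hq
    have h1 := rot_sq θ (-q.1, q.2)
    simp only [hA, Prod.fst_add, Prod.snd_add]
    set r := rot θ (-q.1, q.2)
    simp only [neg_sq] at h1
    nlinarith [sq_nonneg (r.1 + 2 * w.1), sq_nonneg (r.2 + 2 * w.2)]
  set G : ℝ × ℝ → ℝ := fun q => ∫ θ in Ioc (0 : ℝ) (2 * π), f (A θ q) with hG
  have hdom : Dominated (volume.restrict (Ioc (0 : ℝ) (2 * π))) fun θ q => f (A θ q) :=
    Dominated.of_Ioc (f := fun θ q => f (A θ q)) (hf.comp hAs) _ _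
  have hAt : ∀ θ q, ∀ t : ℝ, A θ (q + t • (1, 0)) = A θ q + t • (-rot θ (1, 0)) := fun θ q t => by
    simp only [hA, rot]
    ext <;> simp <;> ring
  have hp1 : ∀ θ, pdv (1, 0) (fun q => f (A θ q)) = fun q => - pdv (rot θ (1, 0)) f (A θ q) := by
    intro θ
    funext q
    refine pdv_eq_of_hasDerivAt (hdom.smooth θ).smooth_differentiable ?_
    simp only [hAt]
    refine (hasDerivAt_line hf.smooth_differentiable _ _ 0).congr_deriv ?_
    rw [← neg_one_smul ℝ (rot θ (1, 0)), pdv_smul_vec]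
    simp
  have hp2 : ∀ θ, pdv (1, 0) (pdv (1, 0) (fun q => f (A θ q)))
      = fun q => pdv (rot θ (1, 0)) (pdv (rot θ (1, 0)) f) (A θ q) := by
    intro θ
    funext q
    refine pdv_eq_of_hasDerivAt ((hdom.pdv _).smooth θ).smooth_differentiable ?_
    simp only [hp1, hAt]
    refine (hasDerivAt_line (hf.pdv (rot θ (1, 0))).smooth_differentiable _ _ 0).fun_neg.congr_deriv
      ?_
    rw [← neg_one_smul ℝ (rot θ (1, 0)), pdv_smul_vec]
    simp
  have hGpp : ∀ q, pdv (1, 0) (pdv (1, 0) G) q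
      = ∫ θ in Ioc (0 : ℝ) (2 * π), pdv (rot θ (1, 0)) (pdv (rot θ (1, 0)) f) (A θ q) := fun q => by
    simp only [hG]
    rw [hdom.pdv_integral, (hdom.pdv _).pdv_integral]
    simp only [hp2]
  have hrot : ∀ φ q, G (rot φ q) = G q := fun φ q => by
    have h1 : ∀ θ, A θ (rot φ q) = A (θ + -φ) q := fun θ => by
      have : (-(rot φ q).1, (rot φ q).2) = rot (-φ) (-q.1, q.2) := by
        simp only [rot, cos_neg, sin_neg, Prod.mk.injEq]
        constructor <;> ring
      simp only [hA, this, rot_rot]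
    simp only [hG, h1]
    refine setIntegral_Ioc_add_const (f := fun θ => f (A θ q)) (fun θ => ?_) _
    simp [hA, rot]
  have hGs : ContDiff ℝ (⊤ : ℕ∞) G := hdom.contDiff
  have hrad := integral_log_radial hGs hrot (lt_of_lt_of_le one_pos hC1) (fun v hv => by
    simp only [hG, hs _ (hAC _ v hv).le, integral_zero])
  have hG0 : G (0, 0) = 2 * π * f w := by
    have : ∀ θ, A θ (0, 0) = w := fun θ => by simp [hA, rot]
    simp only [hG, this]
    simp [pi_pos.le]
  have hpp0 : ∀ u v : ℝ × ℝ, M ^ 2 < v.1 ^ 2 + v.2 ^ 2 → pdv u (pdv u f) v = 0 := fun u v hv => by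
    have ho : IsOpen {v : ℝ × ℝ | M ^ 2 < v.1 ^ 2 + v.2 ^ 2} :=
      isOpen_lt continuous_const (by fun_prop)
    have h1 : ∀ v : ℝ × ℝ, M ^ 2 < v.1 ^ 2 + v.2 ^ 2 → pdv u f v = 0 := fun v hv => by
      rw [pdv_congr_of_eventuallyEq (g := fun _ => 0), pdv_fun_zero]
      filter_upwards [ho.mem_nhds hv] with x hx using hs x (le_of_lt hx)
    rw [pdv_congr_of_eventuallyEq (g := fun _ => 0), pdv_fun_zero]
    filter_upwards [ho.mem_nhds hv] with x hx using h1 x hx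
  have hD : ContDiff ℝ (⊤ : ℕ∞) fun q : ℝ × ℝ × ℝ =>
      pdv (rot q.1 (1, 0)) (pdv (rot q.1 (1, 0)) f) (A q.1 q.2) := by
    have h0 : ContDiff ℝ (⊤ : ℕ∞) fun q : ℝ × ℝ × ℝ => rot q.1 (1, 0) := by
      unfold rot
      fun_prop
    simp only [pdv_pdv hf]
    have h2 : ContDiff ℝ (⊤ : ℕ∞) (fderiv ℝ (fderiv ℝ f)) :=
      (hf.fderiv_right (m := (⊤ : ℕ∞)) (by simp)).fderiv_right (by simp)
    exact ((h2.comp hAs).clm_apply h0).clm_apply h0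
  have hfub := integrable_prod_of_compact locallyIntegrable_log_fst hD.continuous
    (isCompact_closedBall (0 : ℝ × ℝ) C) 0 (2 * π) (fun θ _ q hq => hpp0 _ _ (hAC θ q (by
      simp only [mem_closedBall_zero_iff, Prod.norm_def, Real.norm_eq_abs, not_le,
        lt_sup_iff] at hq
      rcases hq with h | h
      · nlinarith [sq_abs q.1, sq_nonneg q.2]
      · nlinarith [sq_abs q.2, sq_nonneg q.1])))
  rw [hG0] at hrad
  have hswap := integral_integral_swap (f := fun (θ : ℝ) (q : ℝ × ℝ) =>
    log q.1 * pdv (rot θ (1, 0)) (pdv (rot θ (1, 0)) f) (A θ q)) hfub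
  simp only [integral_const_mul, ← hGpp] at hswap
  rw [hrad] at hswap
  rw [show 4 * π ^ 2 * f w = 2 * π * (2 * π * f w) by ring, ← hswap]
  refine integral_congr_ae (Filter.Eventually.of_forall fun θ => ?_)
  simp only
  rw [← integral_add_right_eq_self _ ((0, -sin θ * w.1 + cos θ * w.2) : ℝ × ℝ)]
  refine integral_congr_ae (Filter.Eventually.of_forall fun q => ?_)
  have : line θ (cos θ * w.1 + sin θ * w.2) (q + (0, -sin θ * w.1 + cos θ * w.2)) = A θ q := by
    have := sin_sq_add_cos_sq θ
    simp only [line, hA, rot]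
    ext
    · simp
      linear_combination w.1 * this
    · simp
      linear_combination w.2 * this
  simp only [this, Prod.fst_add, add_zero]

theorem PlanarSupport.integral_pdv_es_pdv_es_logT (hg : PlanarSupport M g) (w : ℝ × ℝ) (z : E8) :
    ∫ θ in Ioc (0 : ℝ) (2 * π), _root_.pdv es (_root_.pdv es (logT g))
      (θ, cos θ * w.1 + sin θ * w.2, z) = 4 * π ^ 2 * g (w, z) := by
  have h1 : ContDiff ℝ (⊤ : ℕ∞) fun v : ℝ × ℝ => g (v, z) :=
    hg.smooth.comp (by fun_prop)
  rw [← integral_log_inversion (f := fun v => g (v, z)) h1 (fun v hv => hg.supp v z hv) w]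
  refine integral_congr_ae (Filter.Eventually.of_forall fun θ => ?_)
  simp only [hg.pdv_es_pdv_es_logT]
  refine integral_congr_ae (Filter.Eventually.of_forall fun q => ?_)
  simp only [pdv_slice (hg.smooth.pdv (rot θ (1, 0), (0 : E8))), pdv_slice hg.smooth]

end RadonInversion

section AngularAverage

open MeasureTheory Set Real

/-- Powers of the normalized raised cosine. -/
def cosKernel (J : ℕ) (t : ℝ) : ℝ := ((1 + cos t) / 2) ^ J

/-- Interpolation nodes in `[0, σ)`. -/
def node (σ : ℝ) (J i : ℕ) : ℝ := σ * i / (J + 1)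

/-- The Lagrange basis polynomials of the nodes. -/
def nodePoly (σ : ℝ) (J i : ℕ) : Polynomial ℝ :=
  Lagrange.basis (Finset.range (J + 1)) (node σ J) i

/-- Functions on `(-σ, σ)` which coincide with their interpolation polynomial. -/
def Interpolates (σ : ℝ) (J : ℕ) (f : ℝ → ℝ) : Prop :=
  ∀ s, |s| < σ → f s = ∑ i ∈ Finset.range (J + 1), (nodePoly σ J i).eval s * f (node σ J i)

theorem abs_node_lt {σ : ℝ} (hσ : 0 < σ) {J i : ℕ} (hi : i ∈ Finset.range (J + 1)) :
    |node σ J i| < σ := by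
  have h1 : (i : ℝ) < J + 1 := by exact_mod_cast Finset.mem_range.1 hi
  have h2 : 0 ≤ node σ J i := by unfold node; positivity
  rw [abs_of_nonneg h2, node, div_lt_iff₀ (by positivity)]
  exact mul_lt_mul_of_pos_left h1 hσ

theorem interpolates_polynomial {σ : ℝ} (hσ : 0 < σ) {J : ℕ} {p : Polynomial ℝ}
    (hp : p.natDegree ≤ J) : Interpolates σ J fun s => p.eval s := by
  intro s _
  have hinj : InjOn (node σ J) (Finset.range (J + 1)) := by
    intro a _ b _ h
    have hJ : (J : ℝ) + 1 ≠ 0 := by positivity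
    simp only [node] at h
    field_simp at h
    exact_mod_cast h
  have hd : p.degree < ((Finset.range (J + 1)).card : WithBot ℕ) := by
    rw [Finset.card_range]
    exact lt_of_le_of_lt Polynomial.degree_le_natDegree (by exact_mod_cast Nat.lt_succ_of_le hp)
  have := congrArg (Polynomial.eval s) (Lagrange.eq_interpolate hinj hd)
  rw [Lagrange.interpolate_apply, Polynomial.eval_finsetSum] at this
  simp only [Polynomial.eval_mul, Polynomial.eval_C] at this
  exact this.trans (Finset.sum_congr rfl fun i _ => mul_comm _ _)

theorem Interpolates.add {σ : ℝ} {J : ℕ} {f g : ℝ → ℝ} (hf : Interpolates σ J f)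
    (hg : Interpolates σ J g) : Interpolates σ J fun s => f s + g s := fun s hs => by
  simp only [hf s hs, hg s hs, mul_add, Finset.sum_add_distrib]

theorem Interpolates.congr {σ : ℝ} (hσ : 0 < σ) {J : ℕ} {f g : ℝ → ℝ} (hf : Interpolates σ J f)
    (h : ∀ s, |s| < σ → g s = f s) : Interpolates σ J g := fun s hs => by
  rw [h s hs, hf s hs]
  exact Finset.sum_congr rfl fun i hi => by rw [h _ (abs_node_lt hσ hi)]

theorem Interpolates.integral {T : Type} [MeasurableSpace T] {μ : Measure T} {σ : ℝ} (hσ : 0 < σ)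
    {J : ℕ} {f : T → ℝ → ℝ} (hf : ∀ t, Interpolates σ J (f t))
    (hi : ∀ s, |s| < σ → Integrable (fun t => f t s) μ) :
    Interpolates σ J fun s => ∫ t, f t s ∂μ := fun s hs => by
  simp only [← integral_const_mul]
  rw [← integral_finsetSum _ fun i hi' => (hi _ (abs_node_lt hσ hi')).const_mul _]
  exact integral_congr_ae (Filter.Eventually.of_forall fun t => hf t s hs)

/-- The polynomial `(A + B) ^ n + (A - B) ^ n` in `A` and `D = A ^ 2 - B ^ 2`. -/
def symPoly (A D : Polynomial ℝ) : ℕ → Polynomial ℝ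
  | 0 => 2
  | 1 => 2 * A
  | n + 2 => 2 * A * symPoly A D (n + 1) - D * symPoly A D n

theorem eval_symPoly (A D : Polynomial ℝ) {x b : ℝ} (hD : D.eval x = A.eval x ^ 2 - b ^ 2) :
    ∀ n : ℕ, (symPoly A D n).eval x = (A.eval x + b) ^ n + (A.eval x - b) ^ n
  | 0 => by simp [symPoly]; norm_num
  | 1 => by simp [symPoly]; ring
  | n + 2 => by
    simp only [symPoly, Polynomial.eval_sub, Polynomial.eval_mul, Polynomial.eval_ofNat,
      eval_symPoly A D hD n, eval_symPoly A D hD (n + 1), hD]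
    ring

theorem natDegree_symPoly {A D : Polynomial ℝ} (hA : A.natDegree ≤ 1) (hD : D.natDegree ≤ 2) :
    ∀ n : ℕ, (symPoly A D n).natDegree ≤ n
  | 0 => by
    simp only [symPoly]
    exact (Polynomial.natDegree_ofNat 2).le
  | 1 => by
    simp only [symPoly]
    refine (Polynomial.natDegree_mul_le_of_le (m := 0) (n := 1)
      (Polynomial.natDegree_ofNat 2).le hA).trans (by simp)
  | n + 2 => by
    simp only [symPoly]
    refine (Polynomial.natDegree_sub_le _ _).trans (max_le ?_ ?_)
    · refine (Polynomial.natDegree_mul_le_of_le (m := 1) (n := n + 1) ?_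
        (natDegree_symPoly hA hD (n + 1))).trans (by omega)
      exact (Polynomial.natDegree_mul_le_of_le (m := 0) (n := 1)
        (Polynomial.natDegree_ofNat 2).le hA)
    · exact (Polynomial.natDegree_mul_le_of_le hD (natDegree_symPoly hA hD n)).trans (by omega)

theorem setIntegral_Ioc_symm_add_const {f : ℝ → ℝ} (hf : Function.Periodic f (2 * π)) (c : ℝ) :
    ∫ t in Ioc (-π) π, f (t + c) = ∫ t in Ioc (-π) π, f t := by
  have h := hf.intervalIntegral_add_eq (-π + c) (-π)
  have hp := pi_pos
  rw [← intervalIntegral.integral_of_le (by linarith),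
    ← intervalIntegral.integral_of_le (by linarith),
    intervalIntegral.integral_comp_add_right (f := f)]
  rw [show -π + c + 2 * π = π + c by ring, show -π + 2 * π = π by ring] at h
  exact h

theorem intervalIntegrable_log_sin_half (c a b : ℝ) :
    IntervalIntegrable (fun t => log (sin ((t + c) / 2))) volume a b := by
  have h1 : IntervalIntegrable (log ∘ sin) volume ((a + c) / 2) ((b + c) / 2) :=
    intervalIntegrable_log_sin
  have h2 := h1.comp_mul_left (c := 1 / 2)
  have h3 := h2.comp_add_right c
  have e1 : (a + c) / 2 / (1 / 2) - c = a := by ring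
  have e2 : (b + c) / 2 / (1 / 2) - c = b := by ring
  rw [e1, e2] at h3
  refine h3.congr fun t _ => ?_
  simp only [Function.comp]
  congr 2
  ring

theorem ae_sin_half_ne_zero (c : ℝ) : ∀ᵐ t : ℝ, sin ((t + c) / 2) ≠ 0 := by
  have : (range fun n : ℤ => 2 * (n * π) - c).Countable := countable_range _
  filter_upwards [this.ae_notMem volume] with t ht h0
  obtain ⟨n, hn⟩ := sin_eq_zero_iff.1 h0
  exact ht ⟨n, by simp only; linarith⟩

theorem periodic_log_sin_half : Function.Periodic (fun t => log (sin (t / 2))) (2 * π) := by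
  intro t
  simp only
  rw [show (t + 2 * π) / 2 = t / 2 + π by ring, sin_add_pi, log_neg_eq_log]

theorem periodic_cosKernel (J : ℕ) : Function.Periodic (cosKernel J) (2 * π) := fun t => by
  simp [cosKernel]

theorem continuous_cosKernel (J : ℕ) : Continuous (cosKernel J) := by
  unfold cosKernel
  fun_prop

theorem integral_cosKernel_mul_log_sin (J : ℕ) (c : ℝ) :
    ∫ t in Ioc (-π) π, cosKernel J t * log (sin ((t + c) / 2))
      = ∫ t in Ioc (-π) π, cosKernel J (t - c) * log (sin (t / 2)) := by
  have h : Function.Periodic (fun t => cosKernel J (t - c) * log (sin (t / 2))) (2 * π) := by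
    intro t
    have h1 := periodic_cosKernel J (t - c)
    have h2 := periodic_log_sin_half t
    simp only at h2 ⊢
    rw [h2, ← h1]
    ring_nf
  rw [← setIntegral_Ioc_symm_add_const h c]
  simp

theorem integrableOn_mul_log_sin_half {f : ℝ → ℝ} (hf : Continuous f) (c : ℝ) :
    IntegrableOn (fun t => f t * log (sin ((t + c) / 2))) (Ioc (-π) π) :=
  ((intervalIntegrable_log_sin_half c (-π) π).continuousOn_mul hf.continuousOn).1

/-- The sum of the two translates of the kernel is polynomial in the cosine of the translation. -/
def kernelPoly (ρ : ℝ) (J : ℕ) (φ : ℝ) : Polynomial ℝ :=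
  Polynomial.C ((1 / 2) ^ J) * symPoly (1 + Polynomial.C (cos φ / ρ) * Polynomial.X)
    ((1 + Polynomial.C (cos φ / ρ) * Polynomial.X) ^ 2
      - Polynomial.C (sin φ ^ 2) * (1 - Polynomial.C (1 / ρ ^ 2) * Polynomial.X ^ 2)) J

theorem natDegree_kernelPoly (ρ : ℝ) (J : ℕ) (φ : ℝ) : (kernelPoly ρ J φ).natDegree ≤ J := by
  refine (Polynomial.natDegree_C_mul_le _ _).trans (natDegree_symPoly ?_ ?_ J)
  · compute_degree
  · compute_degree

theorem eval_kernelPoly {ρ : ℝ} (J : ℕ) (φ ψ : ℝ) (hρ : ρ ≠ 0) :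
    (kernelPoly ρ J φ).eval (ρ * cos ψ) = cosKernel J (φ - ψ) + cosKernel J (φ + ψ) := by
  have hψ := sin_sq_add_cos_sq ψ
  rw [kernelPoly, Polynomial.eval_mul, eval_symPoly (b := sin φ * sin ψ)]
  · simp only [Polynomial.eval_C, Polynomial.eval_add, Polynomial.eval_one, Polynomial.eval_mul,
      Polynomial.eval_X, cosKernel, cos_sub, cos_add]
    rw [mul_add, ← mul_pow, ← mul_pow]
    congr 2 <;> field_simp <;> ring
  · simp only [Polynomial.eval_C, Polynomial.eval_add, Polynomial.eval_one, Polynomial.eval_mul,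
      Polynomial.eval_X, Polynomial.eval_sub, Polynomial.eval_pow]
    have : 1 / ρ ^ 2 * (ρ * cos ψ) ^ 2 = cos ψ ^ 2 := by field_simp
    rw [this]
    linear_combination (sin φ ^ 2) * hψ

theorem integral_cosKernel_mul_log {ρ : ℝ} (hρ : 0 < ρ) (J : ℕ) (δ ψ : ℝ) :
    ∫ t in Ioc (-π) π, cosKernel J t * log (ρ * cos ψ - ρ * cos (t + δ))
      = (∫ t in Ioc (-π) π, cosKernel J t * log (2 * ρ)) +
        ∫ t in Ioc (-π) π, (kernelPoly ρ J (t - δ)).eval (ρ * cos ψ) * log (sin (t / 2)) := by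
  have hk := continuous_cosKernel J
  have h1 : ∀ᵐ t : ℝ, cosKernel J t * log (ρ * cos ψ - ρ * cos (t + δ))
      = cosKernel J t * log (2 * ρ) + (cosKernel J t * log (sin ((t + (δ + ψ)) / 2))
        + cosKernel J t * log (sin ((t + (δ - ψ)) / 2))) := by
    filter_upwards [ae_sin_half_ne_zero (δ + ψ), ae_sin_half_ne_zero (δ - ψ)] with t ht1 ht2
    rw [← mul_add, ← mul_add, ← log_mul ht1 ht2, ← log_mul (by positivity) (mul_ne_zero ht1 ht2)]
    congr 2
    have h := cos_sub_cos ψ (t + δ)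
    rw [show (ψ - (t + δ)) / 2 = -((t + (δ - ψ)) / 2) by ring, sin_neg,
      show (ψ + (t + δ)) / 2 = (t + (δ + ψ)) / 2 by ring] at h
    linear_combination ρ * h
  have h2 := integrableOn_mul_log_sin_half hk (δ + ψ)
  have h3 := integrableOn_mul_log_sin_half hk (δ - ψ)
  have h4 : IntegrableOn (fun t => cosKernel J t * log (sin ((t + (δ + ψ)) / 2))
      + cosKernel J t * log (sin ((t + (δ - ψ)) / 2))) (Ioc (-π) π) := h2.add h3
  rw [integral_congr_ae (ae_restrict_of_ae h1), integral_add
    ((hk.integrableOn_Icc.mono_set Ioc_subset_Icc_self).mul_const _)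
    h4, integral_add h2 h3,
    integral_cosKernel_mul_log_sin, integral_cosKernel_mul_log_sin, ← integral_add]
  · congr 1
    refine integral_congr_ae (Filter.Eventually.of_forall fun t => ?_)
    simp only [eval_kernelPoly J _ _ hρ.ne']
    rw [show t - (δ + ψ) = t - δ - ψ by ring, show t - (δ - ψ) = t - δ + ψ by ring]
    ring
  · simpa [IntegrableOn] using integrableOn_mul_log_sin_half (f := fun t => cosKernel J (t - (δ + ψ)))
      (hk.comp (by fun_prop)) 0
  · simpa [IntegrableOn] using integrableOn_mul_log_sin_half (f := fun t => cosKernel J (t - (δ - ψ)))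
      (hk.comp (by fun_prop)) 0

theorem interpolates_integral_log {σ : ℝ} (hσ : 0 < σ) (J : ℕ) (θ : ℝ) {v : ℝ × ℝ}
    (hv : σ ^ 2 ≤ v.1 ^ 2 + v.2 ^ 2) : Interpolates σ J fun s =>
      ∫ t in Ioc (-π) π, cosKernel J t * log (s - (cos (θ + t) * v.1 + sin (θ + t) * v.2)) := by
  obtain ⟨β, hβ⟩ := exists_polar v
  set ρ : ℝ := √(v.1 ^ 2 + v.2 ^ 2) with hρ
  have hσρ : σ ≤ ρ := Real.le_sqrt_of_sq_le hv
  have hρ0 : 0 < ρ := hσ.trans_le hσρ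
  have hcos : ∀ s, |s| < σ → ρ * cos (arccos (s / ρ)) = s := fun s hs => by
    have h1 := abs_lt.1 (hs.trans_le hσρ)
    rw [cos_arccos]
    · field_simp
    · rw [le_div_iff₀ hρ0]
      linarith
    · rw [div_le_iff₀ hρ0]
      linarith
  have hmain : Interpolates σ J fun s => (∫ t in Ioc (-π) π, cosKernel J t * log (2 * ρ)) +
      ∫ t in Ioc (-π) π, (kernelPoly ρ J (t - (θ - β))).eval s * log (sin (t / 2)) := by
    refine Interpolates.add ?_ ?_
    · have := interpolates_polynomial hσ (J := J)
        (p := Polynomial.C (∫ t in Ioc (-π) π, cosKernel J t * log (2 * ρ))) (by simp)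
      simpa using this
    · refine Interpolates.integral hσ (fun t => ?_) fun s hs => ?_
      · have := interpolates_polynomial hσ (J := J)
          (p := kernelPoly ρ J (t - (θ - β)) * Polynomial.C (log (sin (t / 2))))
          ((Polynomial.natDegree_mul_C_le _ _).trans (natDegree_kernelPoly _ _ _))
        simpa only [Polynomial.eval_mul, Polynomial.eval_C] using this
      · rw [← hcos s hs]
        simp only [eval_kernelPoly J _ _ hρ0.ne']
        have hk := continuous_cosKernel J
        simpa [IntegrableOn] using integrableOn_mul_log_sin_half (f := fun t =>
          cosKernel J (t - (θ - β) - arccos (s / ρ)) + cosKernel J (t - (θ - β) + arccos (s / ρ)))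
          (by fun_prop) 0
  refine hmain.congr hσ fun s hs => ?_
  conv_rhs => rw [← hcos s hs]
  rw [← integral_cosKernel_mul_log hρ0, hcos s hs]
  refine integral_congr_ae (Filter.Eventually.of_forall fun t => ?_)
  have h1 : v.1 = ρ * cos β := congrArg Prod.fst hβ
  have h2 : v.2 = ρ * sin β := congrArg Prod.snd hβ
  simp only [h1, h2]
  rw [show t + (θ - β) = θ + t - β by ring, cos_sub]
  ring_nf

end AngularAverage

section ShellAverage

open MeasureTheory Set Real

theorem measurePreserving_rot (φ : ℝ) : MeasurePreserving (rot φ) volume volume := by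
  have h1 := (rotation (Circle.exp φ)).measurePreserving
  have h2 := (Complex.volume_preserving_equiv_real_prod.comp h1).comp
    (Complex.volume_preserving_equiv_real_prod.symm)
  refine (congrArg (fun f => MeasurePreserving f volume volume) ?_).mp h2
  funext v
  simp only [Function.comp, rotation_apply, Circle.coe_exp,
    Complex.measurableEquivRealProd_apply, Complex.measurableEquivRealProd_symm_apply,
    Complex.mul_re, Complex.mul_im, Complex.exp_ofReal_mul_I_re, Complex.exp_ofReal_mul_I_im, rot]
  ext <;> simp <;> ring

theorem measurePreserving_line (θ s : ℝ) : MeasurePreserving (line θ s) volume volume := by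
  have h1 := (Measure.measurePreserving_sub_left (volume : Measure ℝ) s).prod
    (MeasurePreserving.id (volume : Measure ℝ))
  rw [← Measure.volume_eq_prod] at h1
  exact (measurePreserving_rot θ).comp h1

theorem sub_line (θ s : ℝ) (q : ℝ × ℝ) :
    s - (cos θ * (line θ s q).1 + sin θ * (line θ s q).2) = q.1 := by
  have := sin_sq_add_cos_sq θ
  simp only [line, rot]
  linear_combination (q.1 - s) * this

variable {M : ℝ} {g : (ℝ × ℝ) × E8 → ℝ}

theorem continuous_slice (hg : PlanarSupport M g) (z : E8) : Continuous fun v : ℝ × ℝ => g (v, z) :=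
  hg.smooth.continuous.comp (by fun_prop)

theorem logT_eq (hg : PlanarSupport M g) (θ s : ℝ) (z : E8) :
    logT g (θ, s, z) = ∫ v : ℝ × ℝ, log (s - (cos θ * v.1 + sin θ * v.2)) * g (v, z) := by
  have h := measurePreserving_line θ s
  have hm : Measurable fun v : ℝ × ℝ => log (s - (cos θ * v.1 + sin θ * v.2)) * g (v, z) :=
    (Real.measurable_log.comp (by fun_prop)).mul (continuous_slice hg z).measurable
  conv_rhs => rw [← h.map_eq]
  rw [integral_map h.aemeasurable hm.aestronglyMeasurable]
  simp only [sub_line, logT]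

/-- Average over the angle against the raised cosine kernel. -/
def angAvg (J : ℕ) (F : X3 → ℝ) (p : X3) : ℝ :=
  ∫ t in Ioc (-π) π, cosKernel J t * F (p.1 + t, p.2)

theorem contDiff_cosKernel (J : ℕ) : ContDiff ℝ (⊤ : ℕ∞) (cosKernel J) := by
  unfold cosKernel
  fun_prop

theorem dominated_angAvg (J : ℕ) {F : X3 → ℝ} (hF : ContDiff ℝ (⊤ : ℕ∞) F) :
    Dominated (volume.restrict (Ioc (-π) π)) fun (t : ℝ) (p : X3) =>
      cosKernel J t * F (p.1 + t, p.2) := by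
  refine Dominated.of_Ioc (f := fun (t : ℝ) (p : X3) => cosKernel J t * F (p.1 + t, p.2)) ?_ _ _
  have h1 : ContDiff ℝ (⊤ : ℕ∞) fun q : ℝ × X3 => cosKernel J q.1 :=
    (contDiff_cosKernel J).comp contDiff_fst
  have h2 : ContDiff ℝ (⊤ : ℕ∞) fun q : ℝ × X3 => F (q.2.1 + q.1, q.2.2) :=
    hF.comp (by fun_prop)
  exact h1.mul h2

theorem contDiff_angAvg (J : ℕ) {F : X3 → ℝ} (hF : ContDiff ℝ (⊤ : ℕ∞) F) :
    ContDiff ℝ (⊤ : ℕ∞) (angAvg J F) :=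
  (dominated_angAvg J hF).contDiff

theorem pdv_angAvg (J : ℕ) {F : X3 → ℝ} (hF : ContDiff ℝ (⊤ : ℕ∞) F) (v : X3) :
    pdv v (angAvg J F) = angAvg J (pdv v F) := by
  unfold angAvg
  rw [(dominated_angAvg J hF).pdv_integral]
  funext p
  refine integral_congr_ae (Filter.Eventually.of_forall fun t => ?_)
  refine pdv_eq_of_hasDerivAt ((dominated_angAvg J hF).smooth t).smooth_differentiable ?_
  refine HasDerivAt.const_mul _ ?_
  have := hasDerivAt_line hF.smooth_differentiable (p.1 + t, p.2) v 0
  refine (this.congr_of_eventuallyEq (Filter.Eventually.of_forall fun r => ?_)).congr_deriv ?_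
  · simp only
    congr 1
    ext <;> simp
    ring
  · simp

theorem interpolates_angAvg_logT {σ : ℝ} (hσ : 0 < σ) (J : ℕ) (hg : PlanarSupport M g)
    (h0 : ∀ v z, v.1 ^ 2 + v.2 ^ 2 < σ ^ 2 → g (v, z) = 0) (θ : ℝ) (z : E8) :
    Interpolates σ J fun s => angAvg J (logT g) (θ, s, z) := by
  set Φ : ℝ → ℝ × (ℝ × ℝ) → ℝ := fun s q =>
    cosKernel J q.1 * log (s - (cos (θ + q.1) * q.2.1 + sin (θ + q.1) * q.2.2)) * g (q.2, z) with hΦ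
  have hΦint : ∀ s, Integrable (Φ s) ((volume.restrict (Ioc (-π) π)).prod volume) := fun s => by
    have hl : Continuous fun q : ℝ × (ℝ × ℝ) => line (θ + q.1) s q.2 := by
      unfold line rot
      fun_prop
    have hk := continuous_cosKernel J
    have hc : Continuous fun q : ℝ × (ℝ × ℝ) => cosKernel J q.1 * g (line (θ + q.1) s q.2, z) :=
      (hk.comp continuous_fst).mul ((continuous_slice hg z).comp hl)
    have h1 := integrable_prod_of_compact locallyIntegrable_log_fst hc
      (isCompact_closedBall (0 : ℝ × ℝ) (|s| + |M|)) (-π) π (fun t _ q hq => by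
        simp only [hg.line_eq_zero hq, mul_zero])
    have hmp : MeasurePreserving (fun q : ℝ × (ℝ × ℝ) => (q.1, line (θ + q.1) s q.2))
        ((volume.restrict (Ioc (-π) π)).prod volume) ((volume.restrict (Ioc (-π) π)).prod volume) :=
      (MeasurePreserving.id _).skew_product (g := fun t q => line (θ + t) s q) hl.measurable
        (Filter.Eventually.of_forall fun t => (measurePreserving_line (θ + t) s).map_eq)
    have hm : Measurable (Φ s) :=
      ((hk.measurable.comp measurable_fst).mul (Real.measurable_log.comp (by fun_prop))).mul
        ((continuous_slice hg z).measurable.comp measurable_snd)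
    rw [← hmp.integrable_comp hm.aestronglyMeasurable]
    refine h1.congr (Filter.Eventually.of_forall fun q => ?_)
    simp only [hΦ, Function.comp, sub_line]
    ring
  have hrep : ∀ s, angAvg J (logT g) (θ, s, z)
      = ∫ v : ℝ × ℝ, ∫ t in Ioc (-π) π, Φ s (t, v) := fun s => by
    rw [← integral_integral_swap (f := fun t v => Φ s (t, v)) (hΦint s)]
    refine integral_congr_ae (Filter.Eventually.of_forall fun t => ?_)
    simp only [logT_eq hg, hΦ, ← integral_const_mul, mul_assoc]
  simp only [hrep]
  refine Interpolates.integral hσ (fun v => ?_) fun s _ => (hΦint s).integral_prod_right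
  simp only [hΦ, integral_mul_const]
  by_cases hv : v.1 ^ 2 + v.2 ^ 2 < σ ^ 2
  · simp only [h0 v z hv, mul_zero]
    intro s _
    simp
  · intro s hs
    have h := interpolates_integral_log hσ J θ (not_lt.1 hv) s hs
    simp only at h ⊢
    rw [h, Finset.sum_mul]
    exact Finset.sum_congr rfl fun i _ => mul_assoc _ _ _

/-- Interpolation in the second coordinate of `X3`. -/
def interp (σ : ℝ) (J : ℕ) (F : X3 → ℝ) (p : X3) : ℝ :=
  ∑ i ∈ Finset.range (J + 1), (nodePoly σ J i).eval p.2.1 * F (p.1, node σ J i, p.2.2)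

theorem contDiff_eval (P : Polynomial ℝ) : ContDiff ℝ (⊤ : ℕ∞) fun p : X3 => P.eval p.2.1 := by
  have : ContDiff ℝ (⊤ : ℕ∞) fun x : ℝ => P.eval x := by
    simpa [Polynomial.aeval_def] using P.contDiff_aeval (𝕜 := ℝ) (⊤ : ℕ∞)
  exact this.comp (by fun_prop)

theorem contDiff_node {F : X3 → ℝ} (hF : ContDiff ℝ (⊤ : ℕ∞) F) (c : ℝ) :
    ContDiff ℝ (⊤ : ℕ∞) fun p : X3 => F (p.1, c, p.2.2) :=
  hF.comp (by fun_prop)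

theorem contDiff_interp (σ : ℝ) (J : ℕ) {F : X3 → ℝ} (hF : ContDiff ℝ (⊤ : ℕ∞) F) :
    ContDiff ℝ (⊤ : ℕ∞) (interp σ J F) :=
  ContDiff.sum fun _ _ => (contDiff_eval _).mul (contDiff_node hF _)

theorem pdv_ez_interp (σ : ℝ) (J : ℕ) {F : X3 → ℝ} (hF : ContDiff ℝ (⊤ : ℕ∞) F) (v : E8) :
    pdv (ez v) (interp σ J F) = interp σ J (pdv (ez v) F) := by
  funext p
  refine pdv_eq_of_hasDerivAt (contDiff_interp σ J hF).smooth_differentiable ?_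
  simp only [interp]
  refine HasDerivAt.fun_sum fun i _ => ?_
  have h : ∀ t : ℝ, (p + t • ez v).2.1 = p.2.1 := fun t => by simp [ez]
  simp only [h]
  refine HasDerivAt.const_mul _ ?_
  have := hasDerivAt_line hF.smooth_differentiable (p.1, node σ J i, p.2.2) (ez v) 0
  simpa [ez] using this

theorem pdv_es_sum_eval (σ : ℝ) (J : ℕ) {F : X3 → ℝ} (hF : ContDiff ℝ (⊤ : ℕ∞) F)
    (P : ℕ → Polynomial ℝ) :
    pdv es (fun p : X3 => ∑ i ∈ Finset.range (J + 1), (P i).eval p.2.1 * F (p.1, node σ J i, p.2.2))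
      = fun p : X3 => ∑ i ∈ Finset.range (J + 1),
        (P i).derivative.eval p.2.1 * F (p.1, node σ J i, p.2.2) := by
  funext p
  refine pdv_eq_of_hasDerivAt (ContDiff.smooth_differentiable
    (ContDiff.sum fun _ _ => (contDiff_eval _).mul (contDiff_node hF _))) ?_
  refine HasDerivAt.fun_sum fun i _ => ?_
  have h1 : ∀ t : ℝ, (p + t • es).2.1 = p.2.1 + t := fun t => by simp [es]
  have h2 : ∀ t : ℝ, (p + t • es).1 = p.1 := fun t => by simp [es]
  have h3 : ∀ t : ℝ, (p + t • es).2.2 = p.2.2 := fun t => by simp [es]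
  simp only [h1, h2, h3]
  refine HasDerivAt.mul_const ?_ _
  have := ((P i).hasDerivAt (p.2.1 + 0)).comp_const_add p.2.1 0
  simpa using this

/-- Families of planar data which are closed along the planes indexed by `S` and independent of
the `k`-th plane. -/
structure IsPlanarFamily (M : ℝ) (S : Finset (Fin 4)) (k : Fin 4)
    (g : Fin 4 → (ℝ × ℝ) × E8 → ℝ) : Prop where
  supp : ∀ j, PlanarSupport M (g j)
  closed_x : ∀ i ∈ S, ∀ j ∈ S, pdv (0, dx i) (g j) = pdv (0, dx j) (g i)
  closed_y : ∀ i ∈ S, ∀ j ∈ S, pdv (0, dy i) (g j) = pdv (0, dy j) (g i)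
  indep_x : ∀ j, pdv (0, dx k) (g j) = fun _ => 0
  indep_y : ∀ j, pdv (0, dy k) (g j) = fun _ => 0

theorem IsPlanarFamily.isClosedFamily {S : Finset (Fin 4)} {k : Fin 4}
    {g : Fin 4 → (ℝ × ℝ) × E8 → ℝ} (hg : IsPlanarFamily M S k g)
    {L : ((ℝ × ℝ) × E8 → ℝ) → X3 → ℝ}
    (hL : ∀ g, PlanarSupport M g → ContDiff ℝ (⊤ : ℕ∞) (L g))
    (hv : ∀ g, PlanarSupport M g → ∀ v, pdv (ez v) (L g) = L (pdv (0, v) g))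
    (h0 : L (fun _ => 0) = fun _ => 0) (c : ℝ) :
    IsClosedFamily S k fun j p => c * pdv es (L (g j)) p := by
  have key : ∀ v j, pdv (ez v) (fun p => c * pdv es (L (g j)) p)
      = fun p => c * pdv es (L (pdv (0, v) (g j))) p := fun v j => by
    have h := hL _ (hg.supp j)
    rw [pdv_const_mul c (h.pdv es).smooth_differentiable, pdv_comm h, hv _ (hg.supp j)]
  refine ⟨fun j => contDiff_const.mul ((hL _ (hg.supp j)).pdv _), fun i hi j hj => ?_,
    fun i hi j hj => ?_, fun j => ?_, fun j => ?_⟩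
  · rw [key, key, hg.closed_x i hi j hj]
  · rw [key, key, hg.closed_y i hi j hj]
  · rw [key, hg.indep_x, h0, pdv_fun_zero]
    simp
  · rw [key, hg.indep_y, h0, pdv_fun_zero]
    simp

end ShellAverage

section ShellSolution

open MeasureTheory Set Real

variable {M : ℝ} {g : (ℝ × ℝ) × E8 → ℝ}

theorem integral_Ioc_swap {f : ℝ → ℝ → ℝ} (hf : Continuous (Function.uncurry f)) (a b c d : ℝ) :
    ∫ x in Ioc a b, ∫ y in Ioc c d, f x y = ∫ y in Ioc c d, ∫ x in Ioc a b, f x y := by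
  refine integral_integral_swap ?_
  rw [Measure.prod_restrict, ← Measure.volume_eq_prod]
  exact (hf.continuousOn.integrableOn_compact (isCompact_Icc.prod isCompact_Icc)).mono_set
    (prod_mono Ioc_subset_Icc_self Ioc_subset_Icc_self)

theorem integral_angAvg (J : ℕ) {F : X3 → ℝ} (hF : Continuous F)
    (hp : ∀ θ q, F (θ + 2 * π, q) = F (θ, q)) (w : ℝ × ℝ) (z : E8) :
    ∫ θ in Ioc 0 (2 * π), angAvg J F (θ, cos θ * w.1 + sin θ * w.2, z)
      = ∫ t in Ioc (-π) π, cosKernel J t * ∫ θ in Ioc 0 (2 * π),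
        F (θ, cos θ * (rot t w).1 + sin θ * (rot t w).2, z) := by
  unfold angAvg
  rw [integral_Ioc_swap (f := fun θ t => cosKernel J t *
    F (θ + t, cos θ * w.1 + sin θ * w.2, z))]
  · refine integral_congr_ae (Filter.Eventually.of_forall fun t => ?_)
    simp only [integral_const_mul]
    congr 1
    rw [← setIntegral_Ioc_add_const (c := t)
      (f := fun θ => F (θ, cos θ * (rot t w).1 + sin θ * (rot t w).2, z))]
    · refine integral_congr_ae (Filter.Eventually.of_forall fun θ => ?_)
      have := sin_sq_add_cos_sq t
      simp only [rot, cos_add, sin_add]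
      congr 3
      linear_combination (-cos θ * w.1 - sin θ * w.2) * this
    · intro θ
      simp only [cos_add_two_pi, sin_add_two_pi, hp]
  · have := continuous_cosKernel J
    unfold Function.uncurry
    fun_prop

theorem exists_polynomial_integral {c a : ℝ → ℝ} (hc : Continuous c) (ha : Continuous a) (b d : ℝ)
    (P : Polynomial ℝ) :
    ∃ R : Polynomial ℝ, ∀ r, R.eval r = ∫ θ in Ioc b d, P.eval (r * c θ) * a θ := by
  induction P using Polynomial.induction_on' with
  | add P Q hP hQ =>
    obtain ⟨R, hR⟩ := hP
    obtain ⟨R', hR'⟩ := hQ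
    refine ⟨R + R', fun r => ?_⟩
    have hi : ∀ P : Polynomial ℝ, IntegrableOn (fun θ => P.eval (r * c θ) * a θ) (Ioc b d) :=
      fun P => ((P.continuous.comp (by fun_prop : Continuous fun θ => r * c θ)).mul
        ha).integrableOn_Icc.mono_set Ioc_subset_Icc_self
    simp only [Polynomial.eval_add, hR, hR', add_mul]
    exact (integral_add (hi P) (hi Q)).symm
  | monomial n x =>
    refine ⟨Polynomial.C (∫ θ in Ioc b d, x * c θ ^ n * a θ) * Polynomial.X ^ n, fun r => ?_⟩
    rw [Polynomial.eval_mul, Polynomial.eval_C, Polynomial.eval_pow, Polynomial.eval_X,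
      ← integral_mul_const]
    refine integral_congr_ae (Filter.Eventually.of_forall fun θ => ?_)
    simp only [Polynomial.eval_monomial, mul_pow]
    ring

theorem pdv_es_pdv_es_interp (σ : ℝ) (J : ℕ) {F : X3 → ℝ} (hF : ContDiff ℝ (⊤ : ℕ∞) F) :
    pdv es (pdv es (interp σ J F)) = fun p : X3 => ∑ i ∈ Finset.range (J + 1),
      (nodePoly σ J i).derivative.derivative.eval p.2.1 * F (p.1, node σ J i, p.2.2) := by
  unfold interp
  rw [pdv_es_sum_eval σ J hF, pdv_es_sum_eval σ J hF]

theorem interp_eventuallyEq {σ : ℝ} {J : ℕ} {F : X3 → ℝ}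
    (h : ∀ θ z, Interpolates σ J fun s => F (θ, s, z)) {p : X3} (hp : |p.2.1| < σ) :
    interp σ J F =ᶠ[nhds p] F := by
  have ho : IsOpen {p : X3 | |p.2.1| < σ} := isOpen_lt (by fun_prop) continuous_const
  filter_upwards [ho.mem_nhds hp] with q hq
  exact (h q.1 q.2.2 q.2.1 hq).symm

theorem pdv_eventuallyEq {E : Type} [NormedAddCommGroup E] [NormedSpace ℝ E] {f g : E → ℝ} {z : E}
    (h : f =ᶠ[nhds z] g) (v : E) : pdv v f =ᶠ[nhds z] pdv v g :=
  h.eventuallyEq_nhds.mono fun _ hy => pdv_congr_of_eventuallyEq hy v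

theorem integral_interp_of_lt {σ : ℝ} (hσ : 0 < σ) (J : ℕ) (hg : PlanarSupport M g)
    (h0 : ∀ v z, v.1 ^ 2 + v.2 ^ 2 < σ ^ 2 → g (v, z) = 0) {w : ℝ × ℝ}
    (hw : w.1 ^ 2 + w.2 ^ 2 < σ ^ 2) (z : E8) :
    ∫ θ in Ioc 0 (2 * π), pdv es (pdv es (interp σ J (angAvg J (logT g))))
      (θ, cos θ * w.1 + sin θ * w.2, z) = 0 := by
  have hL := hg.contDiff_logT
  have h1 : ∀ θ : ℝ, pdv es (pdv es (interp σ J (angAvg J (logT g))))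
      (θ, cos θ * w.1 + sin θ * w.2, z) = angAvg J (pdv es (pdv es (logT g)))
        (θ, cos θ * w.1 + sin θ * w.2, z) := fun θ => by
    rw [← pdv_angAvg J (hL.pdv _), ← pdv_angAvg J hL]
    refine pdv_congr_of_eventuallyEq (pdv_eventuallyEq (interp_eventuallyEq
      (interpolates_angAvg_logT hσ J hg h0) (abs_lt_of_sq_lt_sq ?_ hσ.le)) _) _
    refine lt_of_le_of_lt ?_ hw
    have := sin_sq_add_cos_sq θ
    nlinarith [sq_nonneg (cos θ * w.2 - sin θ * w.1)]
  simp only [h1]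
  rw [integral_angAvg J ((hL.pdv _).pdv _).continuous]
  · simp only [hg.integral_pdv_es_pdv_es_logT]
    refine integral_eq_zero_of_ae (Filter.Eventually.of_forall fun t => ?_)
    simp only [Pi.zero_apply]
    rw [h0 _ _ (by rwa [rot_sq]), mul_zero, mul_zero]
  · rintro θ ⟨s, z⟩
    have hr : ∀ v, rot (θ + 2 * π) v = rot θ v := fun v => by simp [rot]
    simp only [hg.pdv_es_pdv_es_logT, line, hr]

theorem integral_interp_eq_zero {σ : ℝ} (hσ : 0 < σ) (J : ℕ) (hg : PlanarSupport M g)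
    (h0 : ∀ v z, v.1 ^ 2 + v.2 ^ 2 < σ ^ 2 → g (v, z) = 0) (w : ℝ × ℝ) (z : E8) :
    ∫ θ in Ioc 0 (2 * π), pdv es (pdv es (interp σ J (angAvg J (logT g))))
      (θ, cos θ * w.1 + sin θ * w.2, z) = 0 := by
  have hA := contDiff_angAvg J hg.contDiff_logT
  set a : ℕ → ℝ → ℝ := fun i θ => angAvg J (logT g) (θ, node σ J i, z) with ha
  have hac : ∀ i, Continuous (a i) := fun i => hA.continuous.comp (by fun_prop)
  set c : ℝ → ℝ := fun θ => cos θ * w.1 + sin θ * w.2 with hc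
  have hcc : Continuous c := by fun_prop
  choose R hR using fun i => exists_polynomial_integral hcc (hac i) 0 (2 * π)
    (nodePoly σ J i).derivative.derivative
  have key : ∀ r : ℝ, (∑ i ∈ Finset.range (J + 1), R i).eval r
      = ∫ θ in Ioc 0 (2 * π), pdv es (pdv es (interp σ J (angAvg J (logT g))))
        (θ, cos θ * (r * w.1) + sin θ * (r * w.2), z) := fun r => by
    rw [Polynomial.eval_finsetSum, pdv_es_pdv_es_interp σ J hA, integral_finsetSum]
    · refine Finset.sum_congr rfl fun i _ => ?_
      rw [hR]
      refine integral_congr_ae (Filter.Eventually.of_forall fun θ => ?_)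
      simp only [hc, ha]
      rw [show r * (cos θ * w.1 + sin θ * w.2) = cos θ * (r * w.1) + sin θ * (r * w.2) by ring]
    · intro i _
      exact (((Polynomial.continuous _).comp (by fun_prop :
        Continuous fun θ : ℝ => cos θ * (r * w.1) + sin θ * (r * w.2))).mul
        (hac i)).integrableOn_Icc.mono_set Ioc_subset_Icc_self
  have hz : ∑ i ∈ Finset.range (J + 1), R i = 0 := by
    refine Polynomial.eq_zero_of_infinite_isRoot _ (Infinite.mono (s := Ioo 0
      (σ / (1 + (w.1 ^ 2 + w.2 ^ 2)))) (fun r hr => ?_) (Ioo_infinite (by positivity)))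
    simp only [mem_ofPred_eq, Polynomial.IsRoot, key]
    refine integral_interp_of_lt hσ J hg h0 (w := (r * w.1, r * w.2)) ?_ z
    have h1 := (lt_div_iff₀ (by positivity)).1 hr.2
    have h2 : (r * (1 + (w.1 ^ 2 + w.2 ^ 2))) ^ 2 < σ ^ 2 :=
      pow_lt_pow_left₀ h1 (mul_nonneg hr.1.le (by positivity)) (by norm_num)
    refine lt_of_le_of_lt ?_ h2
    simp only
    have h3 : 0 ≤ w.1 ^ 2 + w.2 ^ 2 := by positivity
    nlinarith [sq_nonneg r, mul_nonneg (sq_nonneg r) h3, mul_nonneg (sq_nonneg r) (sq_nonneg (w.1 ^ 2 + w.2 ^ 2))]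
  have := key 1
  rw [hz, Polynomial.eval_zero] at this
  simpa using this.symm

/-- The closed family of the logarithmic potential solution. -/
def logFamily (g : Fin 4 → (ℝ × ℝ) × E8 → ℝ) (j : Fin 4) (p : X3) : ℝ :=
  (4 * π ^ 2)⁻¹ * pdv es (logT (g j)) p

/-- The total mass of the raised cosine kernel. -/
def kernelMass (J : ℕ) : ℝ := ∫ t in Ioc (-π) π, cosKernel J t

/-- The closed family of the averaged and interpolated solution. -/
def polyFamily (σ : ℝ) (J : ℕ) (g : Fin 4 → (ℝ × ℝ) × E8 → ℝ) (j : Fin 4) (p : X3) : ℝ :=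
  ((4 * π ^ 2)⁻¹ * (kernelMass J)⁻¹) * pdv es (interp σ J (angAvg J (logT (g j)))) p

variable {S : Finset (Fin 4)} {k : Fin 4} {G : Fin 4 → (ℝ × ℝ) × E8 → ℝ}

theorem IsPlanarFamily.logFamily (hG : IsPlanarFamily M S k G) : IsClosedFamily S k (logFamily G) :=
  hG.isClosedFamily (fun _ h => h.contDiff_logT) (fun _ h v => h.pdv_logT v)
    (by funext p; simp [logT]) _

theorem IsPlanarFamily.polyFamily (hG : IsPlanarFamily M S k G) (σ : ℝ) (J : ℕ) :
    IsClosedFamily S k (polyFamily σ J G) := by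
  refine hG.isClosedFamily (L := fun g => interp σ J (angAvg J (logT g)))
    (fun _ h => contDiff_interp σ J (contDiff_angAvg J h.contDiff_logT)) (fun _ h v => ?_) ?_ _
  · rw [pdv_ez_interp σ J (contDiff_angAvg J h.contDiff_logT), pdv_angAvg J h.contDiff_logT,
      h.pdv_logT]
  · funext p
    simp [interp, angAvg, logT]

theorem pairOp_logFamily (hG : IsPlanarFamily M S k G) (hk : k ∉ S) {j : Fin 4} (hj : j ∈ S)
    (z : E8) : pairOp k j (superpose k (homotopyOp S (logFamily G))) z
      = G j ((z.1 k, z.2 k), z) := by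
  rw [pairOp_superpose_homotopyOp hG.logFamily hk hj]
  have h := ((hG.supp j).contDiff_logT.pdv es).smooth_differentiable
  have h2 := (hG.supp j).integral_pdv_es_pdv_es_logT (z.1 k, z.2 k) z
  unfold logFamily
  rw [pdv_const_mul _ h, integral_const_mul]
  simp only [emb]
  rw [h2, inv_mul_cancel_left₀ (by positivity)]

theorem pairOp_polyFamily {σ : ℝ} (hσ : 0 < σ) (J : ℕ) (hG : IsPlanarFamily M S k G)
    (h0 : ∀ j v z, v.1 ^ 2 + v.2 ^ 2 < σ ^ 2 → G j (v, z) = 0) (hk : k ∉ S) {j : Fin 4}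
    (hj : j ∈ S) (z : E8) :
    pairOp k j (superpose k (homotopyOp S (polyFamily σ J G))) z = 0 := by
  rw [pairOp_superpose_homotopyOp (hG.polyFamily σ J) hk hj]
  have h := ((contDiff_interp σ J (contDiff_angAvg J (hG.supp j).contDiff_logT)).pdv
    es).smooth_differentiable
  have h2 := integral_interp_eq_zero hσ J (hG.supp j) (h0 j) (z.1 k, z.2 k) z
  unfold polyFamily
  rw [pdv_const_mul _ h, integral_const_mul]
  simp only [emb]
  rw [h2, mul_zero]

end ShellSolution

section SmallSolution

open MeasureTheory Set Real Filter Topology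

theorem kernelMass_pos (J : ℕ) : 0 < kernelMass J := by
  have hp := pi_pos
  rw [kernelMass, ← intervalIntegral.integral_of_le (by linarith)]
  refine intervalIntegral.intervalIntegral_pos_of_pos_on
    ((continuous_cosKernel J).intervalIntegrable _ _) (fun t ht => ?_) (by linarith)
  refine pow_pos (div_pos ?_ two_pos) J
  have h : cos π < cos |t| :=
    cos_lt_cos_of_nonneg_of_le_pi (abs_nonneg t) le_rfl (abs_lt.2 ht)
  rw [cos_pi, cos_abs] at h
  linarith

theorem tendsto_cosKernel {h : ℝ → ℝ} (hh : Continuous h) (h0 : h 0 = 0) :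
    Tendsto (fun J => (kernelMass J)⁻¹ * ∫ t in Ioc (-π) π, cosKernel J t * h t) atTop (𝓝 0) := by
  have hp := pi_pos
  have := tendsto_setIntegral_pow_smul_of_unique_maximum_of_isCompact_of_continuousOn
    (μ := (volume : Measure ℝ)) (s := Icc (-π) π) isCompact_Icc
    (c := fun t => (1 + cos t) / 2) (x₀ := 0) (g := h)
    (by fun_prop) (fun y hy hy0 => ?_) (fun y _ => ?_) (by norm_num) ?_ hh.continuousOn
  · rw [h0] at this
    simpa only [integral_Icc_eq_integral_Ioc, smul_eq_mul, kernelMass, cosKernel] using this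
  · have h1 : cos |y| < cos 0 :=
      cos_lt_cos_of_nonneg_of_le_pi le_rfl (abs_le.2 hy) (abs_pos.2 hy0)
    rw [cos_abs] at h1
    linarith
  · have := neg_one_le_cos y
    linarith
  · rw [interior_Icc, closure_Ioo (by linarith)]
    constructor <;> linarith

variable {S : Finset (Fin 4)} {k : Fin 4}

/-- Translation of the angle in a family. -/
def shift (t : ℝ) (Q : Fin 4 → X3 → ℝ) (j : Fin 4) (p : X3) : ℝ := Q j (p.1 + t, p.2)

theorem shift_zero (Q : Fin 4 → X3 → ℝ) : shift 0 Q = Q := by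
  funext j p
  simp [shift]

variable {Q : Fin 4 → X3 → ℝ}

theorem contDiff_homotopyIntegrand_shift (S : Finset (Fin 4))
    (hQ : ∀ j, ContDiff ℝ (⊤ : ℕ∞) (Q j)) :
    ContDiff ℝ (⊤ : ℕ∞) fun q : ℝ × (ℝ × X3) => homotopyIntegrand S (shift q.2.1 Q) q.1 q.2.2 := by
  have h1 : ContDiff ℝ (⊤ : ℕ∞) fun q : ℝ × (ℝ × X3) => q.2.2.1 := by fun_prop
  have h2 : ContDiff ℝ (⊤ : ℕ∞) fun q : ℝ × (ℝ × X3) => q.2.2.2.2 := by fun_prop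
  refine ContDiff.sum fun j _ => ContDiff.mul (contDiff_perpC h1 h2 j) ?_
  have h3 : ContDiff ℝ (⊤ : ℕ∞) fun q : ℝ × (ℝ × X3) => contr S q.1 q.2.2 :=
    (contDiff_contr S).comp (contDiff_fst.prodMk (contDiff_snd.comp contDiff_snd))
  have h4 : ContDiff ℝ (⊤ : ℕ∞) fun q : ℝ × (ℝ × X3) => q.2.2.1 + q.2.1 := by fun_prop
  have h5 : ContDiff ℝ (⊤ : ℕ∞) fun q : ℝ × (ℝ × X3) => q.2.2.2.1 := by fun_prop
  exact (hQ j).comp (h4.prodMk (h5.prodMk h3))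

theorem contDiff_homotopyOp_shift (S : Finset (Fin 4)) (hQ : ∀ j, ContDiff ℝ (⊤ : ℕ∞) (Q j)) :
    ContDiff ℝ (⊤ : ℕ∞) fun q : ℝ × X3 => homotopyOp S (shift q.1 Q) q.2 :=
  (Dominated.of_Ioc (f := fun τ (q : ℝ × X3) => homotopyIntegrand S (shift q.1 Q) τ q.2)
    (contDiff_homotopyIntegrand_shift S hQ) 0 1).contDiff

theorem contDiff_superpose_shift (k : Fin 4) (S : Finset (Fin 4))
    (hQ : ∀ j, ContDiff ℝ (⊤ : ℕ∞) (Q j)) :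
    ContDiff ℝ (⊤ : ℕ∞) (Function.uncurry fun t z =>
      superpose k (homotopyOp S (shift t Q)) z) := by
  have h1 : ContDiff ℝ (⊤ : ℕ∞) fun x : ℝ × (ℝ × E8) => emb k x.1 x.2.2 :=
    (contDiff_emb k).comp (contDiff_fst.prodMk (contDiff_snd.comp contDiff_snd))
  have h2 : ContDiff ℝ (⊤ : ℕ∞) fun x : ℝ × (ℝ × E8) => x.2.1 := by fun_prop
  have h3 : ContDiff ℝ (⊤ : ℕ∞) (Function.uncurry fun θ (q : ℝ × E8) =>
      homotopyOp S (shift q.1 Q) (emb k θ q.2)) :=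
    (contDiff_homotopyOp_shift S hQ).comp
      (f := fun x : ℝ × (ℝ × E8) => (x.2.1, emb k x.1 x.2.2)) (h2.prodMk h1)
  have h4 := (Dominated.of_Ioc h3 0 (2 * π)).contDiff
  have h5 : (Function.uncurry fun t z => superpose k (homotopyOp S (shift t Q)) z)
      = fun q : ℝ × E8 => ∫ θ in Ioc 0 (2 * π), homotopyOp S (shift q.1 Q) (emb k θ q.2) := rfl
  rw [h5]
  exact h4

theorem homotopyOp_angAvg (S : Finset (Fin 4)) (hQ : ∀ j, ContDiff ℝ (⊤ : ℕ∞) (Q j)) (J : ℕ)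
    (p : X3) : homotopyOp S (fun j => angAvg J (Q j)) p
      = ∫ t in Ioc (-π) π, cosKernel J t * homotopyOp S (shift t Q) p := by
  have hk := continuous_cosKernel J
  have hc := (contDiff_homotopyIntegrand_shift S hQ).continuous
  simp only [homotopyOp, ← integral_const_mul]
  rw [integral_Ioc_swap (f := fun t τ => cosKernel J t * homotopyIntegrand S (shift t Q) τ p)]
  · refine integral_congr_ae (Eventually.of_forall fun τ => ?_)
    simp only [homotopyIntegrand, angAvg, shift, ← integral_const_mul, Finset.mul_sum]
    rw [integral_finsetSum]
    · refine Finset.sum_congr rfl fun j _ => integral_congr_ae (Eventually.of_forall fun t => ?_)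
      simp only
      ring
    · intro j _
      have h : Continuous fun t : ℝ => cosKernel J t *
          (perpC p.1 j p.2.2 * Q j (p.1 + t, p.2.1, contr S τ p)) :=
        hk.mul (continuous_const.mul ((hQ j).continuous.comp (by fun_prop)))
      exact h.integrableOn_Icc.mono_set Ioc_subset_Icc_self
  · have h : Continuous fun x : ℝ × ℝ => ((x.2, x.1, p) : ℝ × (ℝ × X3)) := by fun_prop
    have h2 := hc.comp h
    exact (hk.comp continuous_fst).mul h2

theorem superpose_angAvg (k : Fin 4) (S : Finset (Fin 4)) (hQ : ∀ j, ContDiff ℝ (⊤ : ℕ∞) (Q j))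
    (J : ℕ) (z : E8) : superpose k (homotopyOp S (fun j => angAvg J (Q j))) z
      = ∫ t in Ioc (-π) π, cosKernel J t * superpose k (homotopyOp S (shift t Q)) z := by
  have hk := continuous_cosKernel J
  simp only [superpose, homotopyOp_angAvg S hQ, ← integral_const_mul]
  refine integral_Ioc_swap (f := fun θ t => cosKernel J t *
    homotopyOp S (shift t Q) (emb k θ z)) ?_ _ _ _ _
  have h1 : Continuous fun x : ℝ × ℝ => emb k x.1 z :=
    ((contDiff_emb k).continuous.comp (Continuous.prodMk_left z)).comp continuous_fst
  have h2 : Continuous fun x : ℝ × ℝ => (x.2, emb k x.1 z) := continuous_snd.prodMk h1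
  have h3 := (contDiff_homotopyOp_shift S hQ).continuous.comp h2
  exact (hk.comp continuous_snd).mul h3

theorem homotopyOp_congr {Q' : Fin 4 → X3 → ℝ} (c : ℝ) {p : X3}
    (h : ∀ j z, Q j (p.1, p.2.1, z) = c * Q' j (p.1, p.2.1, z)) :
    homotopyOp S Q p = c * homotopyOp S Q' p := by
  simp only [homotopyOp, homotopyIntegrand, h, ← integral_const_mul, Finset.mul_sum]
  refine integral_congr_ae (Eventually.of_forall fun τ => Finset.sum_congr rfl fun j _ => ?_)
  ring

variable {M : ℝ} {G : Fin 4 → (ℝ × ℝ) × E8 → ℝ}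

theorem superpose_polyFamily {σ : ℝ} (hσ : 0 < σ) (J : ℕ) (hG : IsPlanarFamily M S k G)
    (h0 : ∀ j v z, v.1 ^ 2 + v.2 ^ 2 < σ ^ 2 → G j (v, z) = 0) {z : E8}
    (hz : z.1 k ^ 2 + z.2 k ^ 2 < σ ^ 2) :
    superpose k (homotopyOp S (polyFamily σ J G)) z = (kernelMass J)⁻¹ *
      ∫ t in Ioc (-π) π, cosKernel J t * superpose k (homotopyOp S (shift t (logFamily G))) z := by
  rw [← superpose_angAvg k S hG.logFamily.smooth, superpose, superpose, ← integral_const_mul]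
  refine integral_congr_ae (Eventually.of_forall fun θ => ?_)
  refine homotopyOp_congr _ fun j z' => ?_
  have hs : |cos θ * z.1 k + sin θ * z.2 k| < σ := by
    refine abs_lt_of_sq_lt_sq (lt_of_le_of_lt ?_ hz) hσ.le
    have := sin_sq_add_cos_sq θ
    nlinarith [sq_nonneg (cos θ * z.2 k - sin θ * z.1 k)]
  have hL := (hG.supp j).contDiff_logT
  simp only [emb, polyFamily]
  rw [pdv_congr_of_eventuallyEq (interp_eventuallyEq
    (interpolates_angAvg_logT hσ J (hG.supp j) (h0 j)) hs), pdv_angAvg J hL]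
  simp only [angAvg, logFamily, ← integral_const_mul]
  refine integral_congr_ae (Eventually.of_forall fun t => ?_)
  simp only
  ring

theorem pairOp_sub {Θ Ξ : E8 → ℝ} (hΘ : ContDiff ℝ (⊤ : ℕ∞) Θ) (hΞ : ContDiff ℝ (⊤ : ℕ∞) Ξ)
    (i j : Fin 4) (z : E8) :
    pairOp i j (fun z => Θ z - Ξ z) z = pairOp i j Θ z - pairOp i j Ξ z := by
  have h : ∀ u v, pdv u (pdv v fun z => Θ z - Ξ z)
      = fun z => pdv u (pdv v Θ) z - pdv u (pdv v Ξ) z := fun u v => by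
    rw [pdv_fun_sub hΘ.smooth_differentiable hΞ.smooth_differentiable,
      pdv_fun_sub (hΘ.pdv v).smooth_differentiable (hΞ.pdv v).smooth_differentiable]
  simp only [pairOp, h]
  ring

theorem coord_sq_lt {R σ : ℝ} (hR : 2 * R ^ 2 ≤ σ ^ 2) {z : E8} (hz : ‖z‖ < R) (k : Fin 4) :
    z.1 k ^ 2 + z.2 k ^ 2 < σ ^ 2 := by
  have h1 : |z.1 k| ≤ ‖z‖ := (norm_le_pi_norm z.1 k).trans (norm_fst_le z)
  have h2 : |z.2 k| ≤ ‖z‖ := (norm_le_pi_norm z.2 k).trans (norm_snd_le z)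
  have h0 := norm_nonneg z
  nlinarith [sq_abs (z.1 k), sq_abs (z.2 k), abs_nonneg (z.1 k), abs_nonneg (z.2 k)]

theorem tendsto_iteratedFDeriv_average {K : ℝ → E8 → ℝ}
    (hK : ContDiff ℝ (⊤ : ℕ∞) (Function.uncurry K)) (hK0 : ∀ z, K 0 z = 0) (n : ℕ) (R : ℝ)
    {ε : ℝ} (hε : 0 < ε) : ∀ᶠ J in atTop, ∀ z, ‖z‖ < R →
      ‖iteratedFDeriv ℝ n (fun z => ∫ t in Ioc (-π) π,
        ((kernelMass J)⁻¹ * cosKernel J t) * K t z) z‖ ≤ ε := by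
  set D : ℝ → E8 → ℝ := fun t z => ‖iteratedFDeriv ℝ n (K t) z‖ with hD
  have hDc : Continuous (Function.uncurry D) := (continuous_iteratedFDeriv_param n hK).norm
  set h : ℝ → ℝ := fun t => sSup (D t '' Metric.closedBall 0 R) with hh
  have hhc : Continuous h := (isCompact_closedBall (0 : E8) R).continuous_sSup hDc
  have hle : ∀ t z, ‖z‖ < R → D t z ≤ h t := fun t z hz => by
    have hcp := (isCompact_closedBall (0 : E8) R).image (hDc.comp (Continuous.prodMk_right t))
    exact le_csSup hcp.bddAbove ⟨z, by simpa using hz.le, rfl⟩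
  have hh0 : h 0 = 0 := by
    have : D 0 = fun _ => 0 := by
      funext z
      have : K 0 = fun _ => 0 := funext hK0
      simp only [hD, this, iteratedFDeriv_fun_zero]
      simp
    rw [hh]
    simp only [this]
    rcases (Metric.closedBall (0 : E8) R).eq_empty_or_nonempty with h | h
    · simp [h]
    · simp [h.image_const]
  filter_upwards [(tendsto_cosKernel hhc hh0).eventually_lt_const hε] with J hJ z hz
  have hk0 : ∀ t, 0 ≤ cosKernel J t := fun t =>
    pow_nonneg (div_nonneg (by linarith [neg_one_le_cos t]) two_pos.le) J
  have hm := (inv_pos.2 (kernelMass_pos J)).le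
  have hs : ∀ t, ContDiff ℝ (⊤ : ℕ∞) (K t) := fun t =>
    hK.comp (contDiff_const.prodMk contDiff_id)
  have hdom := Dominated.of_Ioc (f := fun t z => ((kernelMass J)⁻¹ * cosKernel J t) * K t z)
    ((contDiff_const.mul ((contDiff_cosKernel J).comp contDiff_fst)).mul hK) (-π) π
  have hc := continuous_cosKernel J
  have heq : ∀ t, ‖iteratedFDeriv ℝ n (fun z => ((kernelMass J)⁻¹ * cosKernel J t) * K t z) z‖
      = (kernelMass J)⁻¹ * (cosKernel J t * D t z) := fun t => by
    have := iteratedFDeriv_const_smul_apply (a := (kernelMass J)⁻¹ * cosKernel J t) (f := K t)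
      (i := n) (x := z) ((hs t).contDiffAt.of_le (by exact_mod_cast le_top))
    simp only [Pi.smul_def, smul_eq_mul] at this
    rw [this, norm_smul, Real.norm_of_nonneg (mul_nonneg hm (hk0 t)), mul_assoc]
  refine (hdom.iteratedFDeriv_integral_le n z).trans (le_trans ?_ hJ.le)
  simp only [heq]
  rw [integral_const_mul]
  refine mul_le_mul_of_nonneg_left (setIntegral_mono ?_ ?_ fun t =>
    mul_le_mul_of_nonneg_left (hle t z hz) (hk0 t)) hm
  · exact (hc.mul (hDc.comp (Continuous.prodMk_left z))).integrableOn_Icc.mono_set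
      Ioc_subset_Icc_self
  · exact (hc.mul hhc).integrableOn_Icc.mono_set Ioc_subset_Icc_self

theorem exists_solution_of_planar (hG : IsPlanarFamily M S k G) (hk : k ∉ S) :
    ∃ Ψ : E8 → ℝ, ContDiff ℝ (⊤ : ℕ∞) Ψ ∧
      (∀ j ∈ S, ∀ z, pairOp k j Ψ z = G j ((z.1 k, z.2 k), z)) ∧
      (∀ i ∈ S, ∀ j ∈ S, ∀ z, pairOp i j Ψ z = 0) :=
  ⟨_, contDiff_superpose k (contDiff_homotopyOp S hG.logFamily.smooth),
    fun _ hj z => pairOp_logFamily hG hk hj z, fun _ hi _ hj z =>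
      pairOp_superpose_homotopyOp_eq_zero hG.logFamily hk hi hj z⟩

theorem exists_small_solution_of_planar (hG : IsPlanarFamily M S k G) (hk : k ∉ S) {σ R : ℝ}
    (hσ : 0 < σ) (h0 : ∀ j v z, v.1 ^ 2 + v.2 ^ 2 < σ ^ 2 → G j (v, z) = 0)
    (hR : 2 * R ^ 2 ≤ σ ^ 2) (N : ℕ) {ε : ℝ} (hε : 0 < ε) :
    ∃ Ψ : E8 → ℝ, ContDiff ℝ (⊤ : ℕ∞) Ψ ∧
      (∀ j ∈ S, ∀ z, pairOp k j Ψ z = G j ((z.1 k, z.2 k), z)) ∧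
      (∀ i ∈ S, ∀ j ∈ S, ∀ z, pairOp i j Ψ z = 0) ∧
      ∀ n ≤ N, ∀ z, ‖z‖ < R → ‖iteratedFDeriv ℝ n Ψ z‖ ≤ ε := by
  have hQ := hG.logFamily.smooth
  set H : ℝ → E8 → ℝ := fun t z => superpose k (homotopyOp S (shift t (logFamily G))) z with hH
  have hHc : ContDiff ℝ (⊤ : ℕ∞) (Function.uncurry H) := contDiff_superpose_shift k S hQ
  have hH0 : superpose k (homotopyOp S (logFamily G)) = H 0 := by
    funext z
    simp only [hH, shift_zero]
  have hK : ContDiff ℝ (⊤ : ℕ∞) (Function.uncurry fun t z => H 0 z - H t z) :=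
    (hHc.comp (contDiff_const.prodMk contDiff_snd)).sub hHc
  have hev : ∀ᶠ J in atTop, ∀ n ∈ Finset.range (N + 1), ∀ z, ‖z‖ < R →
      ‖iteratedFDeriv ℝ n (fun z => ∫ t in Ioc (-π) π,
        ((kernelMass J)⁻¹ * cosKernel J t) * (H 0 z - H t z)) z‖ ≤ ε :=
    (Finset.eventually_all _).2 fun n _ => tendsto_iteratedFDeriv_average hK (by simp) n R hε
  obtain ⟨J, hJ⟩ := hev.exists
  have hP := hG.polyFamily σ J
  have hΘ := contDiff_superpose k (contDiff_homotopyOp S hQ)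
  have hΞ := contDiff_superpose k (contDiff_homotopyOp S hP.smooth)
  refine ⟨fun z => superpose k (homotopyOp S (logFamily G)) z
    - superpose k (homotopyOp S (polyFamily σ J G)) z, hΘ.sub hΞ, fun j hj z => ?_,
    fun i hi j hj z => ?_, fun n hn z hz => ?_⟩
  · rw [pairOp_sub hΘ hΞ, pairOp_logFamily hG hk hj, pairOp_polyFamily hσ J hG h0 hk hj, sub_zero]
  · rw [pairOp_sub hΘ hΞ, pairOp_superpose_homotopyOp_eq_zero hG.logFamily hk hi hj,
      pairOp_superpose_homotopyOp_eq_zero hP hk hi hj, sub_zero]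
  · refine le_of_eq_of_le (congrArg norm (Filter.EventuallyEq.eq_of_nhds
      (Filter.EventuallyEq.iteratedFDeriv ℝ ?_ n))) (hJ n (by simpa [Nat.lt_succ_iff] using hn) z hz)
    have ho : IsOpen {z : E8 | ‖z‖ < R} := isOpen_lt continuous_norm continuous_const
    filter_upwards [ho.mem_nhds hz] with y hy
    have hc := continuous_cosKernel J
    have hHy : Continuous fun t => H t y := hHc.continuous.comp (Continuous.prodMk_left y)
    rw [superpose_polyFamily hσ J hG h0 (coord_sq_lt hR hy k), hH0]
    have h1 : IntegrableOn (fun t => cosKernel J t * H 0 y) (Ioc (-π) π) :=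
      (hc.mul continuous_const).integrableOn_Icc.mono_set Ioc_subset_Icc_self
    have h2 : IntegrableOn (fun t => cosKernel J t * H t y) (Ioc (-π) π) :=
      (hc.mul hHy).integrableOn_Icc.mono_set Ioc_subset_Icc_self
    simp only [mul_assoc, mul_sub]
    rw [integral_sub (h1.const_mul _) (h2.const_mul _), integral_const_mul, integral_const_mul,
      integral_mul_const, ← mul_assoc]
    change H 0 y - _ = (kernelMass J)⁻¹ * kernelMass J * H 0 y - _
    rw [inv_mul_cancel₀ (kernelMass_pos J).ne', one_mul]

end SmallSolution

section Gluing

open MeasureTheory Set Filter Topology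

/-- Replacement of the `k`-th plane coordinates of `q.2` by `q.1`. -/
def repl (k : Fin 4) (q : (ℝ × ℝ) × E8) : E8 :=
  q.2 + ((q.1.1 - q.2.1 k) • dx k + (q.1.2 - q.2.2 k) • dy k)

theorem repl_self (k : Fin 4) (z : E8) : repl k ((z.1 k, z.2 k), z) = z := by simp [repl]

theorem contDiff_repl (k : Fin 4) : ContDiff ℝ (⊤ : ℕ∞) (repl k) := by
  unfold repl
  fun_prop

theorem repl_add_smul (k : Fin 4) (q : (ℝ × ℝ) × E8) (t : ℝ) {v : E8} (h1 : v.1 k = 0)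
    (h2 : v.2 k = 0) : repl k (q + t • (0, v)) = repl k q + t • v := by
  simp only [repl, Prod.fst_add, Prod.snd_add, Prod.smul_fst, Prod.smul_snd, smul_zero, add_zero,
    Pi.add_apply, Pi.smul_apply, h1, h2]
  abel

theorem repl_add_smul_self (k : Fin 4) (q : (ℝ × ℝ) × E8) (t a b : ℝ) :
    repl k (q + t • (0, a • dx k + b • dy k)) = repl k q := by
  simp only [repl, dx, dy]
  ext i
  · by_cases h : i = k
    · subst h
      simp
    · simp [h]
  · by_cases h : i = k
    · subst h
      simp
    · simp [h]

/-- Cut off of a family in the `k`-th plane, the plane being separated as an additional variable. -/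
def cutFamily (k : Fin 4) (χ : ℝ × ℝ → ℝ) (u : Fin 4 → E8 → ℝ) (j : Fin 4)
    (q : (ℝ × ℝ) × E8) : ℝ := χ q.1 * u j (repl k q)

variable {S : Finset (Fin 4)} {k : Fin 4} {u : Fin 4 → E8 → ℝ} {χ : ℝ × ℝ → ℝ}

theorem contDiff_cutFamily (hχ : ContDiff ℝ (⊤ : ℕ∞) χ) (hu : ∀ j, ContDiff ℝ (⊤ : ℕ∞) (u j))
    (k j : Fin 4) : ContDiff ℝ (⊤ : ℕ∞) (cutFamily k χ u j) :=
  (hχ.comp contDiff_fst).mul ((hu j).comp (contDiff_repl k))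

theorem pdv_cutFamily (hχ : ContDiff ℝ (⊤ : ℕ∞) χ) (hu : ∀ j, ContDiff ℝ (⊤ : ℕ∞) (u j))
    (j : Fin 4) {v : E8} (h1 : v.1 k = 0) (h2 : v.2 k = 0) :
    pdv (0, v) (cutFamily k χ u j) = fun q => χ q.1 * pdv v (u j) (repl k q) := by
  funext q
  refine pdv_eq_of_hasDerivAt (contDiff_cutFamily hχ hu k j).smooth_differentiable ?_
  have h : ∀ t : ℝ, cutFamily k χ u j (q + t • (0, v)) = χ q.1 * u j (repl k q + t • v) := fun t => by
    rw [cutFamily, repl_add_smul k q t h1 h2]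
    simp
  simp only [h]
  have := hasDerivAt_line (hu j).smooth_differentiable (repl k q) v 0
  simpa using this.const_mul (χ q.1)

theorem pdv_cutFamily_self (hχ : ContDiff ℝ (⊤ : ℕ∞) χ) (hu : ∀ j, ContDiff ℝ (⊤ : ℕ∞) (u j))
    (j : Fin 4) (a b : ℝ) :
    pdv (0, a • dx k + b • dy k) (cutFamily k χ u j) = fun _ => 0 := by
  funext q
  refine pdv_eq_of_hasDerivAt (contDiff_cutFamily hχ hu k j).smooth_differentiable ?_
  have h : ∀ t : ℝ, cutFamily k χ u j (q + t • (0, a • dx k + b • dy k))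
      = cutFamily k χ u j q := fun t => by
    rw [cutFamily, repl_add_smul_self]
    simp [cutFamily]
  simp only [h]
  exact hasDerivAt_const _ _

theorem isPlanarFamily_cutFamily {M : ℝ} (hχ : ContDiff ℝ (⊤ : ℕ∞) χ)
    (hM : ∀ v : ℝ × ℝ, M ^ 2 ≤ v.1 ^ 2 + v.2 ^ 2 → χ v = 0)
    (hu : ∀ j, ContDiff ℝ (⊤ : ℕ∞) (u j)) (hk : k ∉ S)
    (hx : ∀ i ∈ S, ∀ j ∈ S, pdv (dx i) (u j) = pdv (dx j) (u i))
    (hy : ∀ i ∈ S, ∀ j ∈ S, pdv (dy i) (u j) = pdv (dy j) (u i)) :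
    IsPlanarFamily M S k (cutFamily k χ u) := by
  have hne : ∀ i ∈ S, k ≠ i := fun i hi h => hk (h ▸ hi)
  have hdx : ∀ i ∈ S, (dx i).1 k = 0 ∧ (dx i).2 k = 0 := fun i hi => by simp [dx, hne i hi]
  have hdy : ∀ i ∈ S, (dy i).1 k = 0 ∧ (dy i).2 k = 0 := fun i hi => by simp [dy, hne i hi]
  refine ⟨fun j => ⟨contDiff_cutFamily hχ hu k j, fun v z hv => ?_⟩, fun i hi j hj => ?_,
    fun i hi j hj => ?_, fun j => ?_, fun j => ?_⟩
  · simp [cutFamily, hM v hv]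
  · rw [pdv_cutFamily hχ hu j (hdx i hi).1 (hdx i hi).2,
      pdv_cutFamily hχ hu i (hdx j hj).1 (hdx j hj).2, hx i hi j hj]
  · rw [pdv_cutFamily hχ hu j (hdy i hi).1 (hdy i hi).2,
      pdv_cutFamily hχ hu i (hdy j hj).1 (hdy j hj).2, hy i hi j hj]
  · simpa using pdv_cutFamily_self (k := k) hχ hu j 1 0
  · simpa using pdv_cutFamily_self (k := k) hχ hu j 0 1

/-- Smooth radial cut off functions of the plane. -/
def diskCutoff (m : ℕ) (v : ℝ × ℝ) : ℝ := Real.smoothTransition (m + 1 - (v.1 ^ 2 + v.2 ^ 2))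

theorem contDiff_diskCutoff (m : ℕ) : ContDiff ℝ (⊤ : ℕ∞) (diskCutoff m) :=
  Real.smoothTransition.contDiff.comp (by fun_prop)

theorem diskCutoff_eq_one {m : ℕ} {v : ℝ × ℝ} (h : v.1 ^ 2 + v.2 ^ 2 ≤ m) : diskCutoff m v = 1 :=
  Real.smoothTransition.one_of_one_le (by linarith)

theorem diskCutoff_eq_zero {m : ℕ} {v : ℝ × ℝ} (h : m + 1 ≤ v.1 ^ 2 + v.2 ^ 2) :
    diskCutoff m v = 0 :=
  Real.smoothTransition.zero_of_nonpos (by linarith)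

/-- A smooth partition of unity of the plane by annuli. -/
def annulus : ℕ → ℝ × ℝ → ℝ
  | 0 => diskCutoff 1
  | m + 1 => fun v => diskCutoff (m + 2) v - diskCutoff (m + 1) v

theorem contDiff_annulus : ∀ m, ContDiff ℝ (⊤ : ℕ∞) (annulus m)
  | 0 => contDiff_diskCutoff 1
  | m + 1 => (contDiff_diskCutoff (m + 2)).sub (contDiff_diskCutoff (m + 1))

theorem annulus_eq_zero_of_le : ∀ (m : ℕ) {v : ℝ × ℝ}, m + 2 ≤ v.1 ^ 2 + v.2 ^ 2 → annulus m v = 0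
  | 0, v, h => diskCutoff_eq_zero (by push_cast at h ⊢; linarith)
  | m + 1, v, h => by
    push_cast at h
    change diskCutoff (m + 2) v - diskCutoff (m + 1) v = 0
    rw [diskCutoff_eq_zero (by push_cast; linarith),
      diskCutoff_eq_zero (by push_cast; linarith), sub_zero]

theorem annulus_eq_zero_of_lt : ∀ {m : ℕ} {v : ℝ × ℝ}, v.1 ^ 2 + v.2 ^ 2 < m → annulus m v = 0
  | 0, v, h => absurd h (not_lt.2 (by push_cast; positivity))
  | m + 1, v, h => by
    push_cast at h
    change diskCutoff (m + 2) v - diskCutoff (m + 1) v = 0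
    rw [diskCutoff_eq_one (by push_cast; linarith),
      diskCutoff_eq_one (by push_cast; linarith), sub_self]

theorem sum_annulus (v : ℝ × ℝ) (N : ℕ) :
    ∑ m ∈ Finset.range (N + 1), annulus m v = diskCutoff (N + 1) v := by
  induction N with
  | zero => simp [annulus]
  | succ N ih =>
    rw [Finset.sum_range_succ, ih, annulus]
    ring

theorem hasSum_annulus (v : ℝ × ℝ) : HasSum (fun m => annulus m v) 1 := by
  obtain ⟨N, hN⟩ := exists_nat_gt (v.1 ^ 2 + v.2 ^ 2)
  rw [← diskCutoff_eq_one (m := N + 1) (v := v) (by push_cast; linarith), ← sum_annulus]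
  refine hasSum_sum_of_ne_finset_zero fun m hm => annulus_eq_zero_of_lt (hN.trans_le ?_)
  simp only [Finset.mem_range, not_lt] at hm
  exact_mod_cast (Nat.le_succ N).trans hm

theorem Dominated.count {F : ℕ → E8 → ℝ} (hF : ∀ m, ContDiff ℝ (⊤ : ℕ∞) (F m))
    (hb : ∀ m : ℕ, ∀ n ≤ m, ∀ z : E8, 2 * ‖z‖ ^ 2 < m →
      ‖iteratedFDeriv ℝ n (F m) z‖ ≤ (1 / 2 : ℝ) ^ m) :
    Dominated (Measure.count : Measure ℕ) F := by
  refine ⟨hF, fun n x => ?_, fun n R => ?_⟩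
  · exact StronglyMeasurable.of_discrete.aestronglyMeasurable
  · have hc : ∀ m, ∃ C, ∀ z ∈ Metric.closedBall (0 : E8) R, ‖iteratedFDeriv ℝ n (F m) z‖ ≤ C :=
      fun m => (isCompact_closedBall (0 : E8) R).exists_bound_of_continuousOn
        ((hF m).continuous_iteratedFDeriv (by exact_mod_cast le_top)).continuousOn
    choose C hC using hc
    obtain ⟨N, hN⟩ := exists_nat_gt (2 * R ^ 2)
    refine ⟨fun m => if max n N ≤ m then (1 / 2 : ℝ) ^ m else C m, ?_,
      Eventually.of_forall fun m z hz => ?_⟩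
    · rw [integrable_count_iff]
      refine (summable_geometric_two.congr_atTop ?_).norm
      filter_upwards [eventually_ge_atTop (max n N)] with m hm
      simp [hm]
    · beta_reduce
      split_ifs with h
      · refine hb m n ((le_max_left _ _).trans h) z (lt_of_le_of_lt ?_ (hN.trans_le
          (by exact_mod_cast (le_max_right _ _).trans h)))
        have := norm_nonneg z
        nlinarith
      · exact hC m z (by simpa using hz.le)

theorem Dominated.pairOp_integral {T : Type} [MeasurableSpace T] {μ : Measure T} {F : T → E8 → ℝ}
    (hF : Dominated μ F) (i j : Fin 4) (z : E8) :
    pairOp i j (fun z => ∫ t, F t z ∂μ) z = ∫ t, pairOp i j (F t) z ∂μ := by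
  simp only [pairOp]
  rw [integral_sub (((hF.pdv _).pdv _).integrable z) (((hF.pdv _).pdv _).integrable z),
    hF.pdv_integral, (hF.pdv _).pdv_integral, hF.pdv_integral, (hF.pdv _).pdv_integral]

theorem exists_solution (hu : ∀ j, ContDiff ℝ (⊤ : ℕ∞) (u j)) (hk : k ∉ S)
    (hx : ∀ i ∈ S, ∀ j ∈ S, pdv (dx i) (u j) = pdv (dx j) (u i))
    (hy : ∀ i ∈ S, ∀ j ∈ S, pdv (dy i) (u j) = pdv (dy j) (u i)) :
    ∃ Θ : E8 → ℝ, ContDiff ℝ (⊤ : ℕ∞) Θ ∧ (∀ j ∈ S, ∀ z, pairOp k j Θ z = u j z) ∧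
      (∀ i ∈ S, ∀ j ∈ S, ∀ z, pairOp i j Θ z = 0) := by
  have main : ∀ m : ℕ, ∃ Ψ : E8 → ℝ, ContDiff ℝ (⊤ : ℕ∞) Ψ ∧
      (∀ j ∈ S, ∀ z, pairOp k j Ψ z = annulus m (z.1 k, z.2 k) * u j z) ∧
      (∀ i ∈ S, ∀ j ∈ S, ∀ z, pairOp i j Ψ z = 0) ∧
      ∀ n ≤ m, ∀ z : E8, 2 * ‖z‖ ^ 2 < m → ‖iteratedFDeriv ℝ n Ψ z‖ ≤ (1 / 2 : ℝ) ^ m := fun m => by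
    have hG : IsPlanarFamily √(m + 2) S k (cutFamily k (annulus m) u) :=
      isPlanarFamily_cutFamily (contDiff_annulus m) (fun v hv => annulus_eq_zero_of_le m
        (by rwa [Real.sq_sqrt (by positivity)] at hv)) hu hk hx hy
    have he : ∀ j z, cutFamily k (annulus m) u j ((z.1 k, z.2 k), z)
        = annulus m (z.1 k, z.2 k) * u j z := fun j z => by rw [cutFamily, repl_self]
    rcases Nat.eq_zero_or_pos m with rfl | hm
    · obtain ⟨Ψ, h1, h2, h3⟩ := exists_solution_of_planar hG hk
      refine ⟨Ψ, h1, fun j hj z => by rw [h2 j hj, he], h3, fun n _ z hz => absurd hz (not_lt.2 ?_)⟩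
      push_cast
      positivity
    · have hm' : (0 : ℝ) < m := by exact_mod_cast hm
      obtain ⟨Ψ, h1, h2, h3, h4⟩ := exists_small_solution_of_planar hG hk (σ := √m) (R := √(m / 2))
        (Real.sqrt_pos.2 hm')
        (fun j v z hv => by
          rw [Real.sq_sqrt hm'.le] at hv
          rw [cutFamily, annulus_eq_zero_of_lt hv, zero_mul])
        (by
          rw [Real.sq_sqrt hm'.le, Real.sq_sqrt (by positivity)]
          linarith)
        m (ε := (1 / 2 : ℝ) ^ m) (by positivity)
      refine ⟨Ψ, h1, fun j hj z => by rw [h2 j hj, he], h3, fun n hn z hz => h4 n hn z ?_⟩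
      exact Real.lt_sqrt_of_sq_lt (by linarith)
  choose F hF1 hF2 hF3 hF4 using main
  have hd := Dominated.count hF1 hF4
  refine ⟨_, hd.contDiff, fun j hj z => ?_, fun i hi j hj z => ?_⟩
  · have hs := (hasSum_annulus (z.1 k, z.2 k)).mul_right (u j z)
    rw [hd.pairOp_integral]
    simp only [hF2 _ j hj]
    rw [integral_countable]
    · simpa using hs.tsum_eq
    · exact integrable_count_iff.2 hs.summable.norm
  · rw [hd.pairOp_integral]
    simp [hF3 _ i hi j hj]

end Gluing

section Potential

theorem contDiff_pairOp {Θ : E8 → ℝ} (hΘ : ContDiff ℝ (⊤ : ℕ∞) Θ) (i j : Fin 4) :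
    ContDiff ℝ (⊤ : ℕ∞) (pairOp i j Θ) :=
  ((hΘ.pdv _).pdv _).sub ((hΘ.pdv _).pdv _)

theorem pdv_pairOp {Θ : E8 → ℝ} (hΘ : ContDiff ℝ (⊤ : ℕ∞) Θ) (i j : Fin 4) (v z : E8) :
    pdv v (pairOp i j Θ) z
      = pdv v (pdv (dx i) (pdv (dy j) Θ)) z - pdv v (pdv (dx j) (pdv (dy i) Θ)) z :=
  congrFun (pdv_fun_sub ((hΘ.pdv _).pdv _).smooth_differentiable
    ((hΘ.pdv _).pdv _).smooth_differentiable v) z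

theorem pairOp_cyclic_x {Θ : E8 → ℝ} (hΘ : ContDiff ℝ (⊤ : ℕ∞) Θ) (i j k : Fin 4) (z : E8) :
    pdv (dx k) (pairOp i j Θ) z + pdv (dx i) (pairOp j k Θ) z + pdv (dx j) (pairOp k i Θ) z
      = 0 := by
  simp only [pdv_pairOp hΘ]
  rw [pdv_comm (hΘ.pdv (dy j)) (dx k) (dx i), pdv_comm (hΘ.pdv (dy k)) (dx i) (dx j),
    pdv_comm (hΘ.pdv (dy i)) (dx j) (dx k)]
  ring

theorem pairOp_cyclic_y {Θ : E8 → ℝ} (hΘ : ContDiff ℝ (⊤ : ℕ∞) Θ) (i j k : Fin 4) (z : E8) :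
    pdv (dy k) (pairOp i j Θ) z + pdv (dy i) (pairOp j k Θ) z + pdv (dy j) (pairOp k i Θ) z
      = 0 := by
  have h : ∀ a b c : Fin 4, pdv (dy a) (pdv (dx b) (pdv (dy c) Θ))
      = pdv (dx b) (pdv (dy a) (pdv (dy c) Θ)) := fun a b c => pdv_comm (hΘ.pdv _) _ _
  simp only [pdv_pairOp hΘ, h]
  rw [pdv_comm hΘ (dy k) (dy j), pdv_comm hΘ (dy k) (dy i), pdv_comm hΘ (dy i) (dy j)]
  ring

/-- Smooth skew-symmetric families satisfying the cyclic closedness conditions. -/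
structure IsBiclosed (ω : Fin 4 → Fin 4 → E8 → ℝ) : Prop where
  smooth : ∀ i j, ContDiff ℝ (⊤ : ℕ∞) (ω i j)
  skew : ∀ i j z, ω i j z = -ω j i z
  cyclic_y : ∀ i j k z,
    pdv (dy k) (ω i j) z + pdv (dy i) (ω j k) z + pdv (dy j) (ω k i) z = 0
  cyclic_x : ∀ i j k z,
    pdv (dx k) (ω i j) z + pdv (dx i) (ω j k) z + pdv (dx j) (ω k i) z = 0

theorem isBiclosed_pairOp {Θ : E8 → ℝ} (hΘ : ContDiff ℝ (⊤ : ℕ∞) Θ) :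
    IsBiclosed fun i j => pairOp i j Θ :=
  ⟨contDiff_pairOp hΘ, fun i j z => by simp [pairOp], pairOp_cyclic_y hΘ, pairOp_cyclic_x hΘ⟩

theorem IsBiclosed.sub {ω ω' : Fin 4 → Fin 4 → E8 → ℝ} (h : IsBiclosed ω) (h' : IsBiclosed ω') :
    IsBiclosed fun i j z => ω i j z - ω' i j z := by
  have hp : ∀ v i j, pdv v (fun z => ω i j z - ω' i j z)
      = fun z => pdv v (ω i j) z - pdv v (ω' i j) z := fun v i j =>
    pdv_fun_sub (h.smooth i j).smooth_differentiable (h'.smooth i j).smooth_differentiable v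
  refine ⟨fun i j => (h.smooth i j).sub (h'.smooth i j), fun i j z => ?_, fun i j k z => ?_,
    fun i j k z => ?_⟩
  · rw [h.skew i j, h'.skew i j]
    ring
  · simp only [hp]
    linear_combination h.cyclic_y i j k z - h'.cyclic_y i j k z
  · simp only [hp]
    linear_combination h.cyclic_x i j k z - h'.cyclic_x i j k z

theorem IsBiclosed.exists_reduction {ω : Fin 4 → Fin 4 → E8 → ℝ} (h : IsBiclosed ω)
    {S : Finset (Fin 4)} {k : Fin 4} (hk : k ∉ S) (h0 : ∀ i ∈ S, ∀ j ∈ S, ∀ z, ω i j z = 0) :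
    ∃ Θ : E8 → ℝ, ContDiff ℝ (⊤ : ℕ∞) Θ ∧
      ∀ i ∈ insert k S, ∀ j ∈ insert k S, ∀ z, ω i j z - pairOp i j Θ z = 0 := by
  have hzero : ∀ i ∈ S, ∀ j ∈ S, ω i j = fun _ => 0 := fun i hi j hj => funext (h0 i hi j hj)
  have hneg : ∀ j, ω j k = fun z => (-1) * ω k j z := fun j => funext fun z => by
    rw [h.skew j k]
    ring
  have hp : ∀ v j z, pdv v (ω j k) z = -pdv v (ω k j) z := fun v j z => by
    rw [hneg, pdv_const_mul _ (h.smooth k j).smooth_differentiable]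
    ring
  obtain ⟨Θ, hΘ, h1, h2⟩ := exists_solution (u := ω k) (h.smooth k) hk
    (fun i hi j hj => funext fun z => by
      have := h.cyclic_x i j k z
      rw [hzero i hi j hj, pdv_fun_zero, hp] at this
      linarith)
    (fun i hi j hj => funext fun z => by
      have := h.cyclic_y i j k z
      rw [hzero i hi j hj, pdv_fun_zero, hp] at this
      linarith)
  refine ⟨Θ, hΘ, fun i hi j hj z => ?_⟩
  have hs : ∀ i j z, pairOp i j Θ z = -pairOp j i Θ z := (isBiclosed_pairOp hΘ).skew
  rcases Finset.mem_insert.1 hi with hik | hi <;> rcases Finset.mem_insert.1 hj with hjk | hj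
  · rw [hik, hjk]
    linarith [h.skew k k z, hs k k z]
  · rw [hik, h1 j hj, sub_self]
  · rw [hjk, h.skew, hs, h1 i hi, sub_self]
  · rw [h0 i hi j hj, h2 i hi j hj, sub_self]

theorem IsBiclosed.exists_potential (C : Finset (Fin 4)) :
    ∀ {ω : Fin 4 → Fin 4 → E8 → ℝ}, IsBiclosed ω → (∀ i ∈ Cᶜ, ∀ j ∈ Cᶜ, ∀ z, ω i j z = 0) →
      ∃ Θ : E8 → ℝ, ContDiff ℝ (⊤ : ℕ∞) Θ ∧ ∀ i j z, ω i j z = pairOp i j Θ z := by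
  induction C using Finset.induction_on with
  | empty =>
    intro ω _ h0
    refine ⟨fun _ => 0, contDiff_const, fun i j z => ?_⟩
    rw [h0 i (by simp) j (by simp)]
    simp [pairOp, pdv_fun_zero]
  | insert k C hk ih =>
    intro ω h h0
    obtain ⟨Θ, hΘ, h1⟩ := h.exists_reduction (S := (insert k C)ᶜ) (k := k) (by simp) h0
    have hC : insert k (insert k C)ᶜ = Cᶜ := by
      ext i
      simp only [Finset.mem_insert, Finset.mem_compl, not_or]
      by_cases hi : i = k
      · subst hi
        simp [hk]
      · simp [hi]
    rw [hC] at h1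
    obtain ⟨Ξ, hΞ, h2⟩ := ih (h.sub (isBiclosed_pairOp hΘ)) h1
    refine ⟨fun z => Ξ z - (0 - Θ z), hΞ.sub (contDiff_const.sub hΘ), fun i j z => ?_⟩
    rw [pairOp_sub hΞ (contDiff_const.sub hΘ), pairOp_sub contDiff_const hΘ, ← h2]
    simp [pairOp, pdv_fun_zero]
    ring

end Potential

/-- if smooth functions `ω_{ij} : ℝ⁸ → ℝ` are skew-symmetric and satisfy the
cyclic closedness conditions in the `y` and in the `x` variables, then there is a smooth
potential `Θ` with `ω_{ij} = Θ_{x^i y^j} − Θ_{x^j y^i}`. -/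
theorem stmt4 (ω : Fin 4 → Fin 4 → E8 → ℝ)
    (hsmooth : ∀ i j : Fin 4, ContDiff ℝ (⊤ : ℕ∞) (ω i j))
    (hskew : ∀ i j : Fin 4, ∀ z : E8, ω i j z = -ω j i z)
    (hcycY : ∀ i j k : Fin 4, ∀ z : E8,
      pdv (dy k) (ω i j) z + pdv (dy i) (ω j k) z + pdv (dy j) (ω k i) z = 0)
    (hcycX : ∀ i j k : Fin 4, ∀ z : E8,
      pdv (dx k) (ω i j) z + pdv (dx i) (ω j k) z + pdv (dx j) (ω k i) z = 0) :
    ∃ Θ : E8 → ℝ, ContDiff ℝ (⊤ : ℕ∞) Θ ∧ ∀ i j : Fin 4, ∀ z : E8,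
      ω i j z = pdv (dx i) (pdv (dy j) Θ) z - pdv (dx j) (pdv (dy i) Θ) z := by
  exact IsBiclosed.exists_potential Finset.univ (ω := ω) ⟨hsmooth, hskew, hcycY, hcycX⟩ (by simp)

end
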